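/- arXiv:1809.04645 — 15 statements merged into one kernel-verified Lean document; each statement's English description precedes it below -/
import Mathlib

section
/- Let 𝒫 = C₂ * C₃ be the free product of a cyclic group C₂ of order 2 (with generator s) and a cyclic group C₃ of order 3 (with generator t). Then there exists a group isomorphism φ : 𝒫 ≃ PSL₂(ℤ) such that φ(s) is the class of σ and φ(t) is the class of τ in PSL₂(ℤ). In particular, PSL₂(ℤ) has the presentation ⟨σ, τ | σ² = τ³ = 1⟩. -/
/-- The element `σ = [[0,-1],[1,0]]` of `SL₂(ℤ)`. -/
def sigmaSL2 : Matrix.SpecialLinearGroup (Fin 2) ℤ :=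
  ⟨!![0, -1; 1, 0], by norm_num [Matrix.det_fin_two_of]⟩

/-- The element `τ = [[-1,1],[-1,0]]` of `SL₂(ℤ)`. -/
def tauSL2 : Matrix.SpecialLinearGroup (Fin 2) ℤ :=
  ⟨!![-1, 1; -1, 0], by norm_num [Matrix.det_fin_two_of]⟩

theorem zmod_hom_exists {G : Type*} [Group G] (n : ℕ) (g : G) (h : g ^ n = 1) :
    ∃ f : Multiplicative (ZMod n) →* G, f (Multiplicative.ofAdd 1) = g := by
  let F : ℤ →+ Additive G := zmultiplesHom _ (Additive.ofMul g)
  have hF : F n = 0 := by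
    simp only [F, zmultiplesHom_apply, natCast_zsmul, ← ofMul_pow, h]; rfl
  refine ⟨AddMonoidHom.toMultiplicativeLeft (ZMod.lift n ⟨F, hF⟩), ?_⟩
  have := ZMod.lift_coe n ⟨F, hF⟩ 1
  rw [Int.cast_one] at this
  change (ZMod.lift n ⟨F, hF⟩ 1).toMul = g
  rw [this]
  simp [F]

abbrev PSL2ZAux : Type :=
  Matrix.SpecialLinearGroup (Fin 2) ℤ ⧸ Subgroup.center (Matrix.SpecialLinearGroup (Fin 2) ℤ)

def pingSet : Bool → Set PSL2ZAux
  | false => (fun A : Matrix.SpecialLinearGroup (Fin 2) ℤ => (QuotientGroup.mk A : PSL2ZAux)) ''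
      {A | A.1 0 0 * A.1 1 0 < 0}
  | true => (fun A : Matrix.SpecialLinearGroup (Fin 2) ℤ => (QuotientGroup.mk A : PSL2ZAux)) ''
      {A | 0 < A.1 0 0 * A.1 1 0}

theorem pingSet_disj : Disjoint (pingSet false) (pingSet true) := by
  rw [Set.disjoint_left]
  rintro _ ⟨A, hA, rfl⟩ ⟨B, hB, hAB⟩
  have h := QuotientGroup.eq.1 hAB
  obtain ⟨r, hr, hz⟩ := Matrix.SpecialLinearGroup.mem_center_iff.1 h
  have hA' : A = B * (B⁻¹ * A) := by group
  have e : A.1 = B.1 * Matrix.scalar (Fin 2) r := by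
    rw [hz]; exact congrArg Subtype.val hA'
  simp only [Set.mem_ofPred_eq] at hA hB
  have e0 : A.1 0 0 = B.1 0 0 * r := by rw [e, Matrix.scalar_apply, Matrix.mul_diagonal]
  have e1 : A.1 1 0 = B.1 1 0 * r := by rw [e, Matrix.scalar_apply, Matrix.mul_diagonal]
  rw [e0, e1] at hA
  simp at hr
  have h3 : B.1 0 0 * r * (B.1 1 0 * r) = B.1 0 0 * B.1 1 0 := by
    rcases hr with rfl | rfl <;> ring
  rw [h3] at hA
  exact absurd hA (not_lt.2 hB.le)

theorem ping_sigma (x : PSL2ZAux) (hx : x ∈ pingSet true) :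
    (QuotientGroup.mk sigmaSL2 : PSL2ZAux) * x ∈ pingSet false := by
  obtain ⟨A, hA, rfl⟩ := hx
  refine ⟨sigmaSL2 * A, ?_, rfl⟩
  simp only [Set.mem_ofPred_eq] at hA ⊢
  change (sigmaSL2.1 * A.1) 0 0 * (sigmaSL2.1 * A.1) 1 0 < 0
  simp [sigmaSL2, Matrix.mul_apply, Fin.sum_univ_two]
  nlinarith

theorem ping_tau (x : PSL2ZAux) (hx : x ∈ pingSet false) :
    (QuotientGroup.mk tauSL2 : PSL2ZAux) * x ∈ pingSet true := by
  obtain ⟨A, hA, rfl⟩ := hx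
  refine ⟨tauSL2 * A, ?_, rfl⟩
  simp only [Set.mem_ofPred_eq] at hA ⊢
  change 0 < (tauSL2.1 * A.1) 0 0 * (tauSL2.1 * A.1) 1 0
  simp [tauSL2, Matrix.mul_apply, Fin.sum_univ_two]
  nlinarith [sq_nonneg (A.1 0 0)]

theorem ping_tau2 (x : PSL2ZAux) (hx : x ∈ pingSet false) :
    (QuotientGroup.mk tauSL2 : PSL2ZAux) * (QuotientGroup.mk tauSL2 * x) ∈ pingSet true := by
  obtain ⟨A, hA, rfl⟩ := hx
  refine ⟨tauSL2 * (tauSL2 * A), ?_, rfl⟩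
  simp only [Set.mem_ofPred_eq] at hA ⊢
  change 0 < (tauSL2.1 * (tauSL2.1 * A.1)) 0 0 * (tauSL2.1 * (tauSL2.1 * A.1)) 1 0
  simp [tauSL2, Matrix.mul_apply, Fin.sum_univ_two, Matrix.vecMul, dotProduct]
  nlinarith [sq_nonneg (A.1 1 0)]

theorem sigma_sq : (QuotientGroup.mk sigmaSL2 : PSL2ZAux) ^ 2 = 1 := by
  rw [← QuotientGroup.mk_pow, QuotientGroup.eq_one_iff,
    Matrix.SpecialLinearGroup.mem_center_iff]
  refine ⟨-1, by simp, ?_⟩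
  rw [Matrix.SpecialLinearGroup.coe_pow]
  ext i j
  fin_cases i <;> fin_cases j <;> simp [sigmaSL2, pow_two]

theorem tau_cube : (QuotientGroup.mk tauSL2 : PSL2ZAux) ^ 3 = 1 := by
  rw [← QuotientGroup.mk_pow, QuotientGroup.eq_one_iff,
    Matrix.SpecialLinearGroup.mem_center_iff]
  refine ⟨1, by simp, ?_⟩
  rw [Matrix.SpecialLinearGroup.coe_pow]
  ext i j
  fin_cases i <;> fin_cases j <;> simp [tauSL2, pow_succ]

abbrev famAux (b : Bool) : Type := Multiplicative (ZMod (cond b 3 2))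

theorem lift_inj_aux (f : Multiplicative (ZMod 2) →* PSL2ZAux)
    (g : Multiplicative (ZMod 3) →* PSL2ZAux)
    (hf : f (Multiplicative.ofAdd 1) = QuotientGroup.mk sigmaSL2)
    (hg : g (Multiplicative.ofAdd 1) = QuotientGroup.mk tauSL2) :
    Function.Injective (Monoid.Coprod.lift f g) := by
  let F : ∀ b : Bool, famAux b →* PSL2ZAux := fun b => match b with
    | false => f
    | true => g
  have hF : Function.Injective (Monoid.CoprodI.lift F) := by
    refine Monoid.CoprodI.lift_injective_of_ping_pong F (Or.inr ⟨true, ?_⟩) pingSet ?_ ?_ ?_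
    · change 3 ≤ Cardinal.mk (ZMod 3)
      simp
    · rintro (_ | _)
      · exact ⟨_, sigmaSL2 * tauSL2, by
          change (sigmaSL2.1 * tauSL2.1) 0 0 * (sigmaSL2.1 * tauSL2.1) 1 0 < 0
          simp [tauSL2, sigmaSL2], rfl⟩
      · exact ⟨_, tauSL2, by
          change 0 < tauSL2.1 0 0 * tauSL2.1 1 0
          simp [tauSL2], rfl⟩
    · rintro (_ | _) (_ | _) h
      · exact absurd rfl h
      · exact pingSet_disj
      · exact pingSet_disj.symm
      · exact absurd rfl h
    · rintro (_ | _) (_ | _) h a ha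
      · exact absurd rfl h
      · rintro _ ⟨x, hx, rfl⟩
        have h2 : ∀ a : Multiplicative (ZMod 2), a ≠ 1 → a = Multiplicative.ofAdd 1 := by decide
        have : F false a = QuotientGroup.mk sigmaSL2 := by
          rw [← hf, ← h2 a ha]
        change F false a * x ∈ _
        rw [this]
        exact ping_sigma x hx
      · rintro _ ⟨x, hx, rfl⟩
        have h2 : ∀ a : Multiplicative (ZMod 3), a ≠ 1 → a = Multiplicative.ofAdd 1 ∨
          a = Multiplicative.ofAdd 1 * Multiplicative.ofAdd 1 := by decide
        change F true a * x ∈ _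
        rcases h2 a ha with h3 | h3
        · have : F true a = QuotientGroup.mk tauSL2 := by
            rw [← hg, ← h3]
          rw [this]
          exact ping_tau x hx
        · have : F true a = QuotientGroup.mk tauSL2 * QuotientGroup.mk tauSL2 := by
            rw [← hg, ← map_mul, ← h3]
          rw [this, mul_assoc]
          exact ping_tau2 x hx
      · exact absurd rfl h
  let P := Monoid.Coprod (Multiplicative (ZMod 2)) (Multiplicative (ZMod 3))
  let u : P →* Monoid.CoprodI famAux := Monoid.Coprod.lift
    (Monoid.CoprodI.of (M := famAux) (i := false)) (Monoid.CoprodI.of (M := famAux) (i := true))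
  let V : ∀ b : Bool, famAux b →* P := fun b => match b with
    | false => Monoid.Coprod.inl
    | true => Monoid.Coprod.inr
  let v : Monoid.CoprodI famAux →* P := Monoid.CoprodI.lift V
  have hvu : v.comp u = MonoidHom.id P := by
    apply Monoid.Coprod.hom_ext
    · refine MonoidHom.ext fun x => ?_
      exact Monoid.CoprodI.lift_of V (i := false) _
    · refine MonoidHom.ext fun x => ?_
      exact Monoid.CoprodI.lift_of V (i := true) _
  have hu : Function.Injective u :=
    Function.LeftInverse.injective (g := v) fun x => DFunLike.congr_fun hvu x
  have hcomp : Monoid.Coprod.lift f g = (Monoid.CoprodI.lift F).comp u := by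
    apply Monoid.Coprod.hom_ext
    · refine MonoidHom.ext fun x => ?_
      exact (Monoid.CoprodI.lift_of F (i := false) _).symm
    · refine MonoidHom.ext fun x => ?_
      exact (Monoid.CoprodI.lift_of F (i := true) _).symm
  rw [hcomp]
  exact hF.comp hu

theorem lift_surj_aux (f : Multiplicative (ZMod 2) →* PSL2ZAux)
    (g : Multiplicative (ZMod 3) →* PSL2ZAux)
    (hf : f (Multiplicative.ofAdd 1) = QuotientGroup.mk sigmaSL2)
    (hg : g (Multiplicative.ofAdd 1) = QuotientGroup.mk tauSL2) :
    Function.Surjective (Monoid.Coprod.lift f g) := by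
  have hS : (QuotientGroup.mk sigmaSL2 : PSL2ZAux) ∈ (Monoid.Coprod.lift f g).range :=
    ⟨Monoid.Coprod.inl (Multiplicative.ofAdd 1), by simp [hf]⟩
  have hT : (QuotientGroup.mk tauSL2 : PSL2ZAux) ∈ (Monoid.Coprod.lift f g).range :=
    ⟨Monoid.Coprod.inr (Multiplicative.ofAdd 1), by simp [hg]⟩
  have key : (⊤ : Subgroup (Matrix.SpecialLinearGroup (Fin 2) ℤ)) ≤
      (Monoid.Coprod.lift f g).range.comap (QuotientGroup.mk' _) := by
    rw [← SpecialLinearGroup.SL2Z_generators, Subgroup.closure_le]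
    rintro x (rfl | rfl)
    · exact hS
    · have : ModularGroup.T = tauSL2 * sigmaSL2 := by
        apply Subtype.ext
        change ModularGroup.T.1 = tauSL2.1 * sigmaSL2.1
        ext i j
        fin_cases i <;> fin_cases j <;> simp [ModularGroup.T, tauSL2, sigmaSL2]
      rw [this]
      exact mul_mem hT hS
  intro x
  obtain ⟨A, rfl⟩ := QuotientGroup.mk_surjective x
  exact key (Subgroup.mem_top A)



/-- `PSL₂(ℤ) = SL₂(ℤ)/{±1}` is the free product of the cyclic group of order `2`
generated by (the class of) `σ` and the cyclic group of order `3` generated by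
(the class of) `τ`; i.e. `PSL₂(ℤ) = ⟨σ, τ | σ² = τ³ = 1⟩`. -/
theorem PSL2Z_isFreeProduct_C2_C3 :
    ∃ φ : Monoid.Coprod (Multiplicative (ZMod 2)) (Multiplicative (ZMod 3)) ≃*
        Matrix.SpecialLinearGroup (Fin 2) ℤ ⧸
          Subgroup.center (Matrix.SpecialLinearGroup (Fin 2) ℤ),
      φ (Monoid.Coprod.inl (Multiplicative.ofAdd (1 : ZMod 2))) = QuotientGroup.mk sigmaSL2 ∧
      φ (Monoid.Coprod.inr (Multiplicative.ofAdd (1 : ZMod 3))) = QuotientGroup.mk tauSL2 := by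
  obtain ⟨f, hf⟩ := zmod_hom_exists 2 _ sigma_sq
  obtain ⟨g, hg⟩ := zmod_hom_exists 3 _ tau_cube
  refine ⟨MulEquiv.ofBijective (Monoid.Coprod.lift f g)
    ⟨lift_inj_aux f g hf hg, lift_surj_aux f g hf hg⟩, ?_, ?_⟩
  · exact hf
  · exact hg
end

section
/- Let R be a commutative ring, G₁ and G₂ groups, and G = G₁ * G₂ their free product; identify G₁ and G₂ with their images in G under the canonical inclusions. Let α : R[G] → R[G/G₁] ⊕ R[G/G₂] be the R-linear map determined by α(g) = (gG₁, −gG₂) for g ∈ G, and let ε : R[G/G₁] ⊕ R[G/G₂] → R be the R-linear map determined by ε(gG₁, 0) = 1 = ε(0, gG₂). Then the sequence 0 → R[G] → R[G/G₁] ⊕ R[G/G₂] → R → 0 is exact: α is injective, the kernel of ε equals the image of α, and ε is surjective. -/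
open Monoid

/-- The affine action of the free product encoding the Fox derivation. -/
noncomputable def foxHom (R : Type*) [CommRing R] (G₁ G₂ : Type*) [Group G₁] [Group G₂] :
    Coprod G₁ G₂ →* Function.End (MonoidAlgebra R (Coprod G₁ G₂)) :=
  Coprod.lift
    { toFun := fun h x => MonoidAlgebra.of R _ (Coprod.inl h) * x
      map_one' := by
        funext x
        simp only [map_one, one_mul]
        rfl
      map_mul' := fun a b => by
        funext x
        simp only [map_mul, mul_assoc]
        rfl }
    { toFun := fun h x => MonoidAlgebra.of R _ (Coprod.inr h) * (x + 1) - 1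
      map_one' := by
        funext x
        simp only [map_one, one_mul, add_sub_cancel_right]
        rfl
      map_mul' := fun a b => by
        funext x
        change _ = MonoidAlgebra.of R _ (Coprod.inr a) *
          ((MonoidAlgebra.of R _ (Coprod.inr b) * (x + 1) - 1) + 1) - 1
        simp only [map_mul, mul_assoc, sub_add_cancel] }

theorem foxHom_inl (R : Type*) [CommRing R] (G₁ G₂ : Type*) [Group G₁] [Group G₂] (h : G₁)
    (x : MonoidAlgebra R (Coprod G₁ G₂)) :
    foxHom R G₁ G₂ (Coprod.inl h) x = MonoidAlgebra.of R _ (Coprod.inl h) * x := by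
  unfold foxHom
  rw [Coprod.lift_apply_inl]
  rfl

theorem foxHom_inr (R : Type*) [CommRing R] (G₁ G₂ : Type*) [Group G₁] [Group G₂] (h : G₂)
    (x : MonoidAlgebra R (Coprod G₁ G₂)) :
    foxHom R G₁ G₂ (Coprod.inr h) x = MonoidAlgebra.of R _ (Coprod.inr h) * (x + 1) - 1 := by
  unfold foxHom
  rw [Coprod.lift_apply_inr]
  rfl

theorem foxHom_mul (R : Type*) [CommRing R] (G₁ G₂ : Type*) [Group G₁] [Group G₂]
    (a b : Coprod G₁ G₂) (x : MonoidAlgebra R (Coprod G₁ G₂)) :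
    foxHom R G₁ G₂ (a * b) x = foxHom R G₁ G₂ a (foxHom R G₁ G₂ b x) := by
  rw [map_mul]
  rfl

theorem foxHom_affine (R : Type*) [CommRing R] (G₁ G₂ : Type*) [Group G₁] [Group G₂]
    (g : Coprod G₁ G₂) : ∀ x : MonoidAlgebra R (Coprod G₁ G₂),
    foxHom R G₁ G₂ g x = MonoidAlgebra.of R _ g * x + foxHom R G₁ G₂ g 0 := by
  induction g using Coprod.induction_on with
  | inl h => intro x; simp only [foxHom_inl, mul_zero, add_zero]
  | inr h => intro x; simp only [foxHom_inr]; noncomm_ring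
  | mul a b ha hb =>
    intro x
    rw [foxHom_mul, foxHom_mul, ha, hb, ha (foxHom R G₁ G₂ b 0), map_mul]
    noncomm_ring

/-- For a free product `G = G₁ * G₂`, the sequence
`0 → R[G] → R[G/G₁] ⊕ R[G/G₂] → R → 0`, where the first map sends `g` to `(gG₁, -gG₂)` and
the second sends each coset to `1`, is exact: the first map is injective, the kernel of the
second map is the image of the first one, and the second map is surjective. -/
theorem free_product_coset_sequence_exact
    (R : Type*) [CommRing R] (G₁ G₂ : Type*) [Group G₁] [Group G₂]
    (α : MonoidAlgebra R (Coprod G₁ G₂) →ₗ[R]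
        ((Coprod G₁ G₂ ⧸ (Coprod.inl : G₁ →* Coprod G₁ G₂).range) →₀ R) ×
        ((Coprod G₁ G₂ ⧸ (Coprod.inr : G₂ →* Coprod G₁ G₂).range) →₀ R))
    (hα : ∀ g : Coprod G₁ G₂,
      α (MonoidAlgebra.single g 1) =
        (Finsupp.single (QuotientGroup.mk g) 1, -Finsupp.single (QuotientGroup.mk g) 1))
    (ε : (((Coprod G₁ G₂ ⧸ (Coprod.inl : G₁ →* Coprod G₁ G₂).range) →₀ R) ×
        ((Coprod G₁ G₂ ⧸ (Coprod.inr : G₂ →* Coprod G₁ G₂).range) →₀ R)) →ₗ[R] R)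
    (hε₁ : ∀ x : Coprod G₁ G₂ ⧸ (Coprod.inl : G₁ →* Coprod G₁ G₂).range,
      ε (Finsupp.single x 1, 0) = 1)
    (hε₂ : ∀ x : Coprod G₁ G₂ ⧸ (Coprod.inr : G₂ →* Coprod G₁ G₂).range,
      ε (0, Finsupp.single x 1) = 1) :
    Function.Injective α ∧ LinearMap.ker ε = LinearMap.range α ∧ Function.Surjective ε := by
  classical
  refine ⟨?_, ?_, ?_⟩
  · let s₁ : (Coprod G₁ G₂ ⧸ (Coprod.inl : G₁ →* Coprod G₁ G₂).range) →
        MonoidAlgebra R (Coprod G₁ G₂) :=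
      Quotient.lift (fun g => foxHom R G₁ G₂ g 0) (by
        intro a b hab
        obtain ⟨h, hh⟩ := QuotientGroup.leftRel_apply.mp hab
        have hb : b = a * Coprod.inl h := by rw [hh]; group
        change foxHom R G₁ G₂ a 0 = foxHom R G₁ G₂ b 0
        rw [hb, foxHom_mul, foxHom_inl, mul_zero])
    let s₂ : (Coprod G₁ G₂ ⧸ (Coprod.inr : G₂ →* Coprod G₁ G₂).range) →
        MonoidAlgebra R (Coprod G₁ G₂) :=
      Quotient.lift (fun g => foxHom R G₁ G₂ g 0 - MonoidAlgebra.of R _ g) (by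
        intro a b hab
        obtain ⟨h, hh⟩ := QuotientGroup.leftRel_apply.mp hab
        have hb : b = a * Coprod.inr h := by rw [hh]; group
        change foxHom R G₁ G₂ a 0 - MonoidAlgebra.of R _ a =
          foxHom R G₁ G₂ b 0 - MonoidAlgebra.of R _ b
        rw [hb, foxHom_mul, foxHom_inr, foxHom_affine R G₁ G₂ a (_ - 1), map_mul]
        noncomm_ring)
    let β := (Finsupp.linearCombination R s₁).coprod (Finsupp.linearCombination R s₂)
    have key : β ∘ₗ α = LinearMap.id := by
      apply MonoidAlgebra.lhom_ext'
      intro g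
      apply LinearMap.ext_ring
      change β (α (MonoidAlgebra.single g 1)) = MonoidAlgebra.single g 1
      rw [hα]
      simp only [β, LinearMap.coprod_apply, map_neg, Finsupp.linearCombination_single, one_smul]
      change foxHom R G₁ G₂ g 0 + -(foxHom R G₁ G₂ g 0 - MonoidAlgebra.of R _ g) = _
      rw [MonoidAlgebra.of_apply]
      abel
    intro x y hxy
    have := congrArg β hxy
    rwa [← LinearMap.comp_apply, ← LinearMap.comp_apply, key] at this
  · apply le_antisymm
    · let q := (LinearMap.range α).mkQ
      let v : Coprod G₁ G₂ → _ := fun g => q (Finsupp.single (QuotientGroup.mk g) 1, 0)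
      let w : Coprod G₁ G₂ → _ := fun g => q (0, Finsupp.single (QuotientGroup.mk g) 1)
      have hvw : ∀ g, v g = w g := by
        intro g
        rw [← sub_eq_zero, ← map_sub]
        simp only [q, Submodule.mkQ_apply, Submodule.Quotient.mk_eq_zero]
        exact ⟨MonoidAlgebra.single g 1, by rw [hα]; simp⟩
      have hv : ∀ h g, v (g * h) = v g := by
        intro h
        induction h using Coprod.induction_on with
        | inl h =>
          intro g
          have : (QuotientGroup.mk (g * Coprod.inl h) :
            Coprod G₁ G₂ ⧸ (Coprod.inl : G₁ →* Coprod G₁ G₂).range) = QuotientGroup.mk g :=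
            QuotientGroup.mk_mul_of_mem g ⟨h, rfl⟩
          simp only [v, this]
        | inr h =>
          intro g
          have : (QuotientGroup.mk (g * Coprod.inr h) :
            Coprod G₁ G₂ ⧸ (Coprod.inr : G₂ →* Coprod G₁ G₂).range) = QuotientGroup.mk g :=
            QuotientGroup.mk_mul_of_mem g ⟨h, rfl⟩
          rw [hvw, hvw]
          simp only [w, this]
        | mul a b ha hb =>
          intro g
          rw [← mul_assoc, hb, ha]
      have hv1 : ∀ g, v g = v 1 := fun g => by simpa using hv g 1
      have key : q = (LinearMap.toSpanSingleton R _ (v 1)) ∘ₗ ε := by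
        apply LinearMap.prod_ext
        · apply Finsupp.lhom_ext'
          intro x
          apply LinearMap.ext_ring
          obtain ⟨g, rfl⟩ := QuotientGroup.mk_surjective x
          change v g = ε (Finsupp.single (QuotientGroup.mk g) 1, 0) • v 1
          rw [hε₁, one_smul, hv1]
        · apply Finsupp.lhom_ext'
          intro x
          apply LinearMap.ext_ring
          obtain ⟨g, rfl⟩ := QuotientGroup.mk_surjective x
          change w g = ε (0, Finsupp.single (QuotientGroup.mk g) 1) • v 1
          rw [hε₂, one_smul, ← hvw, hv1]
      intro x hx
      rw [LinearMap.mem_ker] at hx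
      have : q x = 0 := by rw [key, LinearMap.comp_apply, hx, map_zero]
      simpa only [q, Submodule.mkQ_apply, Submodule.Quotient.mk_eq_zero] using this
    · rw [LinearMap.range_le_ker_iff]
      apply MonoidAlgebra.lhom_ext'
      intro g
      apply LinearMap.ext_ring
      change ε (α (MonoidAlgebra.single g 1)) = 0
      have : ∀ (a : (Coprod G₁ G₂ ⧸ (Coprod.inl : G₁ →* Coprod G₁ G₂).range) →₀ R)
        (b : (Coprod G₁ G₂ ⧸ (Coprod.inr : G₂ →* Coprod G₁ G₂).range) →₀ R),
          (a, -b) = (a, 0) - (0, b) := by intro a b; simp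
      rw [hα, this, map_sub, hε₁, hε₂, sub_self]
  · intro r
    refine ⟨r • (Finsupp.single (QuotientGroup.mk 1) 1, 0), ?_⟩
    rw [map_smul, hε₁, smul_eq_mul, mul_one]
end

section
/- Let R be a commutative ring, G₁ and G₂ groups, G = G₁ * G₂ their free product, and M a representation of G over R. For every n ≥ 2 the map Hⁿ(G, M) → Hⁿ(G₁, M) × Hⁿ(G₂, M), whose components are the restriction maps in group cohomology along the canonical inclusions G₁ → G and G₂ → G, is bijective; for n = 1 this map is surjective. -/
open CategoryTheory

universe u

variable {k G H : Type u} [CommRing k] [Group G] [Group H]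

lemma MonoidHom.comp_contractNth (f : H →* G) {n : ℕ} (j : Fin (n + 1)) (x : Fin (n + 1) → H) :
    ⇑f ∘ Fin.contractNth j (· * ·) x = Fin.contractNth j (· * ·) (⇑f ∘ x) := by
  funext i
  simp only [Function.comp_apply, Fin.contractNth]
  split_ifs <;> simp

/-- The restriction of inhomogeneous cochains along a group homomorphism `f : H →* G`:
a cochain `c : Gⁿ → A` is sent to the cochain `Hⁿ → A`, `x ↦ c (f ∘ x)`, where `H` acts on
`A` via `f`. -/
noncomputable def cochainsRes (f : H →* G) (A : Rep k G) :
    groupCohomology.inhomogeneousCochains A ⟶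
      groupCohomology.inhomogeneousCochains (Rep.of (A.ρ.comp f)) where
  f n := ModuleCat.ofHom
    { toFun := fun c x => c (⇑f ∘ x)
      map_add' := fun _ _ => rfl
      map_smul' := fun _ _ => rfl }
  comm' := by
    rintro i j (rfl : i + 1 = j)
    rw [groupCohomology.inhomogeneousCochains.d_def, groupCohomology.inhomogeneousCochains.d_def]
    ext c x
    show inhomogeneousCochains.d (Rep.of (A.ρ.comp f)) i (fun y => c (⇑f ∘ y)) x
        = inhomogeneousCochains.d A i c (⇑f ∘ x)
    simp only [inhomogeneousCochains.d_hom_apply, Function.comp_apply, Rep.of_ρ,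
      MonoidHom.comp_apply, MonoidHom.comp_contractNth]
    rfl

/-- The restriction map `Hⁿ(G, A) → Hⁿ(H, A)` in group cohomology along a group
homomorphism `f : H →* G`, where `H` acts on `A` via `f`. -/
noncomputable def cohomologyRes (f : H →* G) (A : Rep k G) (n : ℕ) :
    groupCohomology A n ⟶ groupCohomology (Rep.of (A.ρ.comp f)) n :=
  HomologicalComplex.homologyMap (cochainsRes f A) n


namespace FreeProdCoh

section cochains

variable {V W : Type u} [AddCommGroup V] [Module k V] [AddCommGroup W] [Module k W]

/-- The inhomogeneous differential for an unbundled representation. -/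
noncomputable def D (ρ : Representation k G V) (n : ℕ) :
    ((Fin n → G) → V) →ₗ[k] ((Fin (n + 1) → G) → V) :=
  (inhomogeneousCochains.d (Rep.of ρ) n).hom

lemma D_apply (ρ : Representation k G V) (n : ℕ) (c : (Fin n → G) → V) (g : Fin (n + 1) → G) :
    D ρ n c g = ρ (g 0) (c fun i => g i.succ) + Finset.univ.sum fun j : Fin (n + 1) =>
        (-1 : k) ^ ((j : ℕ) + 1) • c (Fin.contractNth j (· * ·) g) := rfl

lemma D_D (ρ : Representation k G V) (n : ℕ) (c : (Fin n → G) → V) :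
    D ρ (n + 1) (D ρ n c) = 0 := by
  have := groupCohomology.inhomogeneousCochains.d_comp_d n (Rep.of ρ)
  exact congrArg (fun f => f.hom c) this

lemma D_res (f : H →* G) (ρ : Representation k G V) (n : ℕ) (c : (Fin n → G) → V) :
    D (ρ.comp f) n (fun y => c (⇑f ∘ y)) = fun x => D ρ n c (⇑f ∘ x) := by
  funext x
  simp only [D_apply, MonoidHom.comp_contractNth]
  rfl

lemma D_map (ρ : Representation k G V) (σ : Representation k G W) (i : V →ₗ[k] W)
    (hi : ∀ g v, i (ρ g v) = σ g (i v)) (n : ℕ) (c : (Fin n → G) → V) :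
    D σ n (fun y => i (c y)) = fun x => i (D ρ n c x) := by
  funext x
  simp only [D_apply, map_add, map_sum, map_smul, hi]

/-- The coinduced representation on functions `G → V`. -/
def coind (k G V : Type u) [CommRing k] [Group G] [AddCommGroup V] [Module k V] :
    Representation k G (G → V) where
  toFun g := 
    { toFun := fun f x => f (x * g)
      map_add' := fun _ _ => rfl
      map_smul' := fun _ _ => rfl }
  map_one' := by ext; simp
  map_mul' a b := by ext; simp [mul_assoc]

lemma coind_apply (g : G) (f : G → V) (x : G) : coind k G V g f x = f (x * g) := rfl

lemma contractNth_cons_zero {n : ℕ} (p : H) (h : Fin (n + 1) → H) :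
    Fin.contractNth 0 (· * ·) (Fin.cons p h : Fin (n + 2) → H)
      = Fin.cons (p * h 0) (fun i => h i.succ) := by
  funext i
  refine Fin.cases ?_ (fun i => ?_) i
  · simp [Fin.contractNth]
  · simp [Fin.contractNth]

lemma contractNth_cons_succ {n : ℕ} (p : H) (h : Fin (n + 1) → H) (j : Fin (n + 1)) :
    Fin.contractNth j.succ (· * ·) (Fin.cons p h : Fin (n + 2) → H)
      = Fin.cons p (Fin.contractNth j (· * ·) h) := by
  funext i
  refine Fin.cases ?_ (fun i => ?_) i
  · simp [Fin.contractNth]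
  · simp [Fin.contractNth]

lemma coind_acyclic (f : H →* G) (p : G → H) (hp : ∀ x h, p (x * f h) = p x * h) (n : ℕ)
    (c : (Fin (n + 1) → H) → (G → V)) (hc : D ((coind k G V).comp f) (n + 1) c = 0) :
    ∃ b, D ((coind k G V).comp f) n b = c := by
  refine ⟨fun h x => c (Fin.cons (p x) h) (x * (f (p x))⁻¹), ?_⟩
  funext h x
  have key := congrFun (congrFun hc (Fin.cons (p x) h)) (x * (f (p x))⁻¹)
  rw [D_apply, Fin.sum_univ_succ] at key
  rw [D_apply]
  simp only [contractNth_cons_zero, contractNth_cons_succ, Fin.cons_zero, Fin.cons_succ,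
    Pi.add_apply, Finset.sum_apply, Pi.smul_apply, MonoidHom.comp_apply, coind_apply,
    Pi.zero_apply, inv_mul_cancel_right, Fin.val_zero, Fin.val_succ, hp, map_mul, mul_inv_rev] at key ⊢
  have e : x * f (h 0) * ((f (h 0))⁻¹ * (f (p x))⁻¹) = x * (f (p x))⁻¹ := by group
  rw [e]
  have e2 : ∀ (j : Fin (n+1)) (v : V), (-1 : k) ^ (j.1 + 1 + 1) • v = - ((-1 : k) ^ (j.1 + 1) • v) := by
    intro j v; rw [pow_succ _ (j.1 + 1)]; simp
  simp only [e2, Finset.sum_neg_distrib] at key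
  simp only [zero_add, pow_one, neg_smul, one_smul] at key
  rw [← sub_eq_zero, ← neg_eq_zero, ← key]
  abel


lemma D_zero_apply (ρ : Representation k G V) (c : (Fin 0 → G) → V) (g : Fin 1 → G) :
    D ρ 0 c g = ρ (g 0) (c Fin.elim0) - c Fin.elim0 := by
  rw [D_apply]
  simp only [Subsingleton.elim _ (Fin.elim0 : Fin 0 → G)]
  simp [sub_eq_add_neg]

lemma D_one_apply (ρ : Representation k G V) (c : (Fin 1 → G) → V) (g : Fin 2 → G) :
    D ρ 1 c g = ρ (g 0) (c fun _ => g 1) - c (fun _ => g 0 * g 1) + c (fun _ => g 0) := by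
  have e0 : Fin.contractNth 0 (· * ·) g = fun _ => g 0 * g 1 := by
    funext i; fin_cases i; simp [Fin.contractNth]
  have e1 : Fin.contractNth 1 (· * ·) g = fun _ => g 0 := by
    funext i; fin_cases i; simp [Fin.contractNth]
  have e2 : (fun i : Fin 1 => g i.succ) = fun _ => g 1 := by
    funext i; fin_cases i; simp
  rw [D_apply, Fin.sum_univ_two, e0, e1, e2]
  simp [sub_eq_add_neg, add_assoc]

lemma D_one_eq_zero_iff (ρ : Representation k G V) (c : (Fin 1 → G) → V) :
    D ρ 1 c = 0 ↔ ∀ a b, c (fun _ => a * b) = ρ a (c fun _ => b) + c (fun _ => a) := by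
  constructor
  · intro h a b
    have := congrFun h ![a, b]
    rw [D_one_apply] at this
    simp only [Matrix.cons_val_zero, Matrix.cons_val_one, Pi.zero_apply] at this
    rw [← sub_eq_zero, ← neg_eq_zero, ← this]
    abel
  · intro h
    funext g
    rw [D_one_apply, h]
    simp

lemma cocycle_one (ρ : Representation k G V) (c : (Fin 1 → G) → V) (h : D ρ 1 c = 0) :
    c (fun _ => 1) = 0 := by
  have := (D_one_eq_zero_iff ρ c).1 h 1 1
  simpa using this

lemma fin1_eta {α : Type*} (y : Fin 1 → α) : y = fun _ => y 0 := by
  funext i; fin_cases i; rfl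

end cochains

section shift

variable {H₁ H₂ : Type u} [Group H₁] [Group H₂]
variable {V I W : Type u} [AddCommGroup V] [Module k V] [AddCommGroup I] [Module k I]
  [AddCommGroup W] [Module k W]

/-- Surjectivity of restriction in degree `n + 1`, on the level of cochains. -/
def SurjP (f₁ : H₁ →* G) (f₂ : H₂ →* G) (ρ : Representation k G V) (n : ℕ) : Prop :=
  ∀ c₁ c₂, D (ρ.comp f₁) (n + 1) c₁ = 0 → D (ρ.comp f₂) (n + 1) c₂ = 0 →
    ∃ c b₁ b₂, D ρ (n + 1) c = 0 ∧
      (fun y => c (⇑f₁ ∘ y)) = c₁ + D (ρ.comp f₁) n b₁ ∧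
      (fun y => c (⇑f₂ ∘ y)) = c₂ + D (ρ.comp f₂) n b₂

/-- Injectivity of restriction in degree `n + 1`, on the level of cochains. -/
def InjP (f₁ : H₁ →* G) (f₂ : H₂ →* G) (ρ : Representation k G V) (n : ℕ) : Prop :=
  ∀ c b₁ b₂, D ρ (n + 1) c = 0 →
      (fun y => c (⇑f₁ ∘ y)) = D (ρ.comp f₁) n b₁ →
      (fun y => c (⇑f₂ ∘ y)) = D (ρ.comp f₂) n b₂ →
      ∃ b, D ρ n b = c

/-- All positive degree cocycles are coboundaries. -/
def Acyc (ρ : Representation k G V) : Prop :=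
  ∀ (n : ℕ) (c : (Fin (n + 1) → G) → V), D ρ (n + 1) c = 0 → ∃ b, D ρ n b = c

lemma factor {X : Type*} (i : V →ₗ[k] I) (q : I →ₗ[k] W)
    (hex : ∀ x, q x = 0 → ∃ v, i v = x) (c : X → I) (hc : ∀ x, q (c x) = 0) :
    ∃ c' : X → V, c = fun x => i (c' x) := by
  choose c' hc' using fun x => hex _ (hc x)
  exact ⟨c', funext fun x => (hc' x).symm⟩

lemma surj_side (f : H →* G) (ρ : Representation k G V) (σ : Representation k G I)
    (τ : Representation k G W) (i : V →ₗ[k] I) (q : I →ₗ[k] W)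
    (hi : ∀ g v, i (ρ g v) = σ g (i v)) (hq : ∀ g v, q (σ g v) = τ g (q v))
    (hinj : Function.Injective i) (hsurj : Function.Surjective q)
    (hex : ∀ x, q x = 0 → ∃ v, i v = x) (n : ℕ)
    (c₁ : (Fin (n + 2) → H) → V) (e₁ : (Fin (n + 1) → H) → I)
    (he₁ : D (σ.comp f) (n + 1) e₁ = fun y => i (c₁ y))
    (c : (Fin (n + 1) → G) → I) (b₁ : (Fin n → H) → W)
    (hb : (fun y => q (c (⇑f ∘ y))) = (fun y => q (e₁ y)) + D (τ.comp f) n b₁)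
    (c' : (Fin (n + 2) → G) → V) (hc' : D σ (n + 1) c = fun y => i (c' y)) :
    ∃ b, (fun y => c' (⇑f ∘ y)) = c₁ + D (ρ.comp f) (n + 1) b := by
  choose s hs using hsurj
  have hb' : b₁ = fun y => q (s (b₁ y)) := by funext y; rw [hs]
  rw [hb', D_map (σ.comp f) (τ.comp f) q (fun h v => hq (f h) v)] at hb
  obtain ⟨b, hb2⟩ := factor i q hex
    ((fun y => c (⇑f ∘ y)) - e₁ - D (σ.comp f) n (fun y => s (b₁ y))) (fun y => by
      have := congrFun hb y
      simp only [Pi.add_apply] at this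
      simp [this])
  refine ⟨b, ?_⟩
  have := congrArg (D (σ.comp f) (n + 1)) hb2
  rw [map_sub, map_sub, D_D, D_map (ρ.comp f) (σ.comp f) i (fun h v => hi (f h) v), he₁,
    D_res, hc'] at this
  funext y
  apply hinj
  have := congrFun this y
  simp only [Pi.sub_apply, sub_zero, Pi.zero_apply] at this
  rw [Pi.add_apply, map_add, ← this]
  abel

lemma surj_shift (f₁ : H₁ →* G) (f₂ : H₂ →* G) (ρ : Representation k G V)
    (σ : Representation k G I)
    (τ : Representation k G W) (i : V →ₗ[k] I) (q : I →ₗ[k] W)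
    (hi : ∀ g v, i (ρ g v) = σ g (i v)) (hq : ∀ g v, q (σ g v) = τ g (q v))
    (hinj : Function.Injective i) (hsurj : Function.Surjective q)
    (hex : ∀ x, q x = 0 → ∃ v, i v = x) (hqi : ∀ v, q (i v) = 0)
    (a₁ : Acyc (σ.comp f₁)) (a₂ : Acyc (σ.comp f₂)) (n : ℕ)
    (hS : SurjP f₁ f₂ τ n) : SurjP f₁ f₂ ρ (n + 1) := by
  intro c₁ c₂ hc₁ hc₂
  have aux : ∀ {K : Type u} [Group K] (f : K →* G) (_ : Acyc (σ.comp f))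
      (c : (Fin (n + 2) → K) → V), D (ρ.comp f) (n + 2) c = 0 →
      ∃ e, D (σ.comp f) (n + 1) e = (fun y => i (c y)) ∧
        D (τ.comp f) (n + 1) (fun y => q (e y)) = 0 := by
    intro K _ f a c hc
    obtain ⟨e, he⟩ := a (n + 1) (fun y => i (c y)) (by
      rw [D_map (ρ.comp f) (σ.comp f) i (fun h v => hi (f h) v), hc]
      funext y; simp)
    refine ⟨e, he, ?_⟩
    rw [D_map (σ.comp f) (τ.comp f) q (fun h v => hq (f h) v), he]
    funext y; simp [hqi]
  obtain ⟨e₁, he₁, hz₁⟩ := aux f₁ a₁ c₁ hc₁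
  obtain ⟨e₂, he₂, hz₂⟩ := aux f₂ a₂ c₂ hc₂
  obtain ⟨c, b₁, b₂, hc, hb₁, hb₂⟩ := hS _ _ hz₁ hz₂
  obtain ⟨c, rfl⟩ : ∃ c' : (Fin (n + 1) → G) → I, c = fun y => q (c' y) := by
    choose s hs using hsurj
    exact ⟨fun y => s (c y), by funext y; rw [hs]⟩
  rw [D_map σ τ q hq] at hc
  obtain ⟨c', hc'⟩ := factor i q hex (D σ (n + 1) c) (fun y => congrFun hc y)
  obtain ⟨d₁, hd₁⟩ := surj_side f₁ ρ σ τ i q hi hq hinj hsurj hex n c₁ e₁ he₁ c b₁ hb₁ c' hc'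
  obtain ⟨d₂, hd₂⟩ := surj_side f₂ ρ σ τ i q hi hq hinj hsurj hex n c₂ e₂ he₂ c b₂ hb₂ c' hc'
  refine ⟨c', d₁, d₂, ?_, hd₁, hd₂⟩
  funext y
  apply hinj
  have h1 := congrFun (D_map ρ σ i hi (n + 2) c') y
  rw [← h1, ← hc', D_D]
  simp

lemma inj_shift (f₁ : H₁ →* G) (f₂ : H₂ →* G) (ρ : Representation k G V)
    (σ : Representation k G I)
    (τ : Representation k G W) (i : V →ₗ[k] I) (q : I →ₗ[k] W)
    (hi : ∀ g v, i (ρ g v) = σ g (i v)) (hq : ∀ g v, q (σ g v) = τ g (q v))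
    (hinj : Function.Injective i) (hsurj : Function.Surjective q)
    (hex : ∀ x, q x = 0 → ∃ v, i v = x) (hqi : ∀ v, q (i v) = 0)
    (a : Acyc σ) (a₁ : Acyc (σ.comp f₁)) (a₂ : Acyc (σ.comp f₂)) (n : ℕ)
    (hS : InjP f₁ f₂ τ n) : InjP f₁ f₂ ρ (n + 1) := by
  intro c b₁ b₂ hc hb₁ hb₂
  obtain ⟨e, he⟩ := a (n + 1) (fun y => i (c y)) (by
      rw [D_map ρ σ i hi, hc]
      funext y; simp)
  have aux : ∀ {K : Type u} [Group K] (f : K →* G) (_ : Acyc (σ.comp f))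
      (b : (Fin (n + 1) → K) → V) (_ : (fun y => c (⇑f ∘ y)) = D (ρ.comp f) (n + 1) b),
      ∃ b', (fun y => q (e (⇑f ∘ y))) = D (τ.comp f) n b' := by
    intro K _ f a b hb
    obtain ⟨d, hd⟩ := a n ((fun y => e (⇑f ∘ y)) - fun y => i (b y)) (by
      rw [map_sub, D_res, he, D_map (ρ.comp f) (σ.comp f) i (fun h v => hi (f h) v), ← hb]
      exact sub_self _)
    refine ⟨fun y => q (d y), ?_⟩
    rw [D_map (σ.comp f) (τ.comp f) q (fun h v => hq (f h) v), hd]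
    funext y
    simp [hqi]
  obtain ⟨d₁, hd₁⟩ := aux f₁ a₁ b₁ hb₁
  obtain ⟨d₂, hd₂⟩ := aux f₂ a₂ b₂ hb₂
  obtain ⟨g, hg⟩ := hS (fun y => q (e y)) d₁ d₂ (by
    rw [D_map σ τ q hq, he]
    funext y
    simp [hqi]) hd₁ hd₂
  obtain ⟨g, rfl⟩ : ∃ c' : (Fin n → G) → I, g = fun y => q (c' y) := by
    choose s hs using hsurj
    exact ⟨fun y => s (g y), by funext y; rw [hs]⟩
  rw [D_map σ τ q hq] at hg
  obtain ⟨b, hb⟩ := factor i q hex (e - D σ n g) (fun y => by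
    have := congrFun hg y
    simp [this])
  refine ⟨b, ?_⟩
  funext y
  apply hinj
  have h1 := congrFun (D_map ρ σ i hi (n + 1) b) y
  rw [← h1, ← hb, map_sub, D_D, he]
  simp

end shift

section base

open Monoid

variable {G₁ G₂ : Type u} [Group G₁] [Group G₂]
variable {V I W : Type u} [AddCommGroup V] [Module k V] [AddCommGroup I] [Module k I]
  [AddCommGroup W] [Module k W]

/-- The monoid homomorphism to affine self-maps defined by a 1-cocycle. -/
def affHom (ρ : Representation k G V) (c : (Fin 1 → G) → V) (hc : D ρ 1 c = 0) :
    G →* Function.End V where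
  toFun g := fun v => ρ g v + c (fun _ => g)
  map_one' := by
    funext v
    rw [cocycle_one ρ c hc]
    simp
    rfl
  map_mul' a b := by
    funext v
    rw [(D_one_eq_zero_iff ρ c).1 hc a b]
    change _ = ρ a (ρ b v + c fun _ => b) + c (fun _ => a)
    simp [add_assoc]

lemma extend_cocycle (ρ : Representation k (Coprod G₁ G₂) V)
    (c₁ : (Fin 1 → G₁) → V) (c₂ : (Fin 1 → G₂) → V)
    (h₁ : D (ρ.comp Coprod.inl) 1 c₁ = 0) (h₂ : D (ρ.comp Coprod.inr) 1 c₂ = 0) :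
    ∃ c, D ρ 1 c = 0 ∧ (fun y => c (⇑(Coprod.inl : G₁ →* Coprod G₁ G₂) ∘ y)) = c₁ ∧
      (fun y => c (⇑(Coprod.inr : G₂ →* Coprod G₁ G₂) ∘ y)) = c₂ := by
  let F : Coprod G₁ G₂ →* Function.End V := Coprod.lift (affHom _ c₁ h₁) (affHom _ c₂ h₂)
  have Fl : ∀ (x : G₁) v, F (Coprod.inl x) v = ρ (Coprod.inl x) v + c₁ (fun _ => x) := fun x v =>
    congrFun (Coprod.lift_apply_inl (affHom _ c₁ h₁) (affHom _ c₂ h₂) x) v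
  have Fr : ∀ (x : G₂) v, F (Coprod.inr x) v = ρ (Coprod.inr x) v + c₂ (fun _ => x) := fun x v =>
    congrFun (Coprod.lift_apply_inr (affHom _ c₁ h₁) (affHom _ c₂ h₂) x) v
  have Fm : ∀ a b v, F (a * b) v = F a (F b v) := fun a b v => by rw [map_mul]; rfl
  have hF : ∀ g v, F g v = ρ g v + F g 0 := by
    intro g
    induction g using Coprod.induction_on with
    | inl x => intro v; simp [Fl]
    | inr x => intro v; simp [Fr]
    | mul a b ha hb =>
      intro v
      rw [Fm, Fm, ha, hb, ha (F b 0)]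
      simp [add_assoc]
  refine ⟨fun y => F (y 0) 0, ?_, ?_, ?_⟩
  · rw [D_one_eq_zero_iff]
    intro a b
    simp only
    rw [Fm, hF a]
  · funext y
    simp [Fl, ← fin1_eta y]
  · funext y
    simp [Fr, ← fin1_eta y]

lemma cocycle_ext (ρ : Representation k (Coprod G₁ G₂) V)
    (c : (Fin 1 → Coprod G₁ G₂) → V) (hc : D ρ 1 c = 0)
    (h₁ : ∀ x : G₁, c (fun _ => Coprod.inl x) = 0) (h₂ : ∀ x : G₂, c (fun _ => Coprod.inr x) = 0) :
    c = 0 := by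
  have : ∀ g, c (fun _ => g) = 0 := by
    intro g
    induction g using Coprod.induction_on with
    | inl x => exact h₁ x
    | inr x => exact h₂ x
    | mul a b ha hb => rw [(D_one_eq_zero_iff ρ c).1 hc, ha, hb]; simp
  funext y
  rw [fin1_eta y]
  exact this _

lemma surj_base (ρ : Representation k (Coprod G₁ G₂) V) :
    SurjP Coprod.inl Coprod.inr ρ 0 := by
  intro c₁ c₂ h₁ h₂
  obtain ⟨c, hc, e₁, e₂⟩ := extend_cocycle ρ c₁ c₂ h₁ h₂
  exact ⟨c, 0, 0, hc, by simp [e₁], by simp [e₂]⟩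

/-- Every element is a sum of a `G₁`-invariant and a `G₂`-invariant one. -/
def Decomp (ρ : Representation k (Coprod G₁ G₂) V) : Prop :=
  ∀ v, ∃ a b, v = a + b ∧ (∀ x : G₁, ρ (Coprod.inl x) a = a) ∧ (∀ x : G₂, ρ (Coprod.inr x) b = b)

lemma decomp_of_acyc (ρ : Representation k (Coprod G₁ G₂) V) (h : Acyc ρ) : Decomp ρ := by
  intro v
  obtain ⟨c, hc, e₁, e₂⟩ := extend_cocycle ρ 0 (D (ρ.comp Coprod.inr) 0 (fun _ => v))
    (map_zero _) (D_D _ _ _)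
  obtain ⟨b, rfl⟩ := h 0 c hc
  refine ⟨b Fin.elim0, v - b Fin.elim0, by abel, fun x => ?_, fun x => ?_⟩
  · have := congrFun e₁ (fun _ => x)
    simp only [D_zero_apply, Function.comp_apply, Pi.zero_apply] at this
    exact sub_eq_zero.1 this
  · have := congrFun e₂ (fun _ => x)
    simp only [D_zero_apply, Function.comp_apply, MonoidHom.comp_apply] at this
    rw [map_sub, ← sub_eq_zero, ← sub_eq_zero.2 this.symm]
    abel

lemma inj_base (ρ : Representation k (Coprod G₁ G₂) V) (h : Decomp ρ) :
    InjP Coprod.inl Coprod.inr ρ 0 := by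
  intro c b₁ b₂ hc h₁ h₂
  obtain ⟨a, b, hab, ha, hb⟩ := h (b₁ Fin.elim0 - b₂ Fin.elim0)
  refine ⟨fun _ => b₁ Fin.elim0 - a, ?_⟩
  symm
  rw [← sub_eq_zero]
  apply cocycle_ext ρ
  · rw [map_sub, hc, D_D]; simp
  · intro x
    have := congrFun h₁ (fun _ => x)
    simp only [D_zero_apply, MonoidHom.comp_apply] at this
    change c (fun _ => Coprod.inl x) = _ at this
    simp [D_zero_apply, this, ha]
  · intro x
    have := congrFun h₂ (fun _ => x)
    simp only [D_zero_apply, MonoidHom.comp_apply] at this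
    change c (fun _ => Coprod.inr x) = _ at this
    have e : b₁ Fin.elim0 - a = b₂ Fin.elim0 + b := by
      rw [sub_eq_iff_eq_add] at hab ⊢; rw [hab]; abel
    simp only [Pi.sub_apply, D_zero_apply, this, e, map_add, hb]
    abel

end base

section main

open Monoid

variable {G₁ G₂ : Type u} [Group G₁] [Group G₂]
variable {V : Type u} [AddCommGroup V] [Module k V]

/-- The embedding of a representation in the coinduced one. -/
def emb (ρ : Representation k G V) : V →ₗ[k] (G → V) where
  toFun v x := ρ x v
  map_add' _ _ := by funext x; simp
  map_smul' _ _ := by funext x; simp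

lemma emb_equivariant (ρ : Representation k G V) (g : G) (v : V) :
    emb ρ (ρ g v) = coind k G V g (emb ρ v) := by
  funext x
  simp [emb, coind_apply]

lemma emb_injective (ρ : Representation k G V) : Function.Injective (emb ρ) := by
  intro a b h
  simpa [emb] using congrFun h 1

/-- The quotient of the coinduced representation. -/
def quo (ρ : Representation k G V) : Representation k G ((G → V) ⧸ LinearMap.range (emb ρ)) :=
  (coind k G V).quotient (LinearMap.range (emb ρ)) (by
    rintro g _ ⟨v, rfl⟩
    exact ⟨ρ g v, emb_equivariant ρ g v⟩)

lemma quo_mk (ρ : Representation k G V) (g : G) (v : G → V) :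
    (LinearMap.range (emb ρ)).mkQ (coind k G V g v) = quo ρ g ((LinearMap.range (emb ρ)).mkQ v) :=
  rfl

lemma acyc_inl : Acyc ((coind k (Coprod G₁ G₂) V).comp
    (Coprod.inl : G₁ →* Coprod G₁ G₂)) := by
  have hp : ∀ (x : Coprod G₁ G₂) (h : G₁), Coprod.fst (x * Coprod.inl h) = Coprod.fst x * h := by
    intro x h
    rw [map_mul, Coprod.fst_apply_inl]
  intro n c hc
  exact coind_acyclic (Coprod.inl : G₁ →* Coprod G₁ G₂)
    (fun x => Coprod.fst x) hp n c hc

lemma acyc_inr : Acyc ((coind k (Coprod G₁ G₂) V).comp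
    (Coprod.inr : G₂ →* Coprod G₁ G₂)) := by
  have hp : ∀ (x : Coprod G₁ G₂) (h : G₂), Coprod.snd (x * Coprod.inr h) = Coprod.snd x * h := by
    intro x h
    rw [map_mul, Coprod.snd_apply_inr]
  intro n c hc
  exact coind_acyclic (Coprod.inr : G₂ →* Coprod G₁ G₂)
    (fun x => Coprod.snd x) hp n c hc

lemma acyc_self : Acyc (coind k G V) := fun n c hc =>
  coind_acyclic (MonoidHom.id G) id (by simp) n c hc

lemma mkQ_emb (ρ : Representation k G V) (v : V) :
    (LinearMap.range (emb ρ)).mkQ (emb ρ v) = 0 := by simp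

lemma mkQ_exact (ρ : Representation k G V) (x : G → V)
    (h : (LinearMap.range (emb ρ)).mkQ x = 0) : ∃ v, emb ρ v = x := by
  simpa using h

theorem surj_all (n : ℕ) : ∀ {V : Type u} [AddCommGroup V] [Module k V]
    (ρ : Representation k (Coprod G₁ G₂) V), SurjP Coprod.inl Coprod.inr ρ n := by
  induction n with
  | zero => exact fun ρ => surj_base ρ
  | succ n ih =>
    intro V _ _ ρ
    exact surj_shift _ _ ρ _ (quo ρ) (emb ρ) _ (emb_equivariant ρ) (quo_mk ρ) (emb_injective ρ)
      (Submodule.mkQ_surjective _) (mkQ_exact ρ) (mkQ_emb ρ) acyc_inl acyc_inr n (ih _)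

lemma decomp_quo (ρ : Representation k (Coprod G₁ G₂) V) : Decomp (quo ρ) := by
  intro w
  obtain ⟨v, rfl⟩ := Submodule.mkQ_surjective _ w
  obtain ⟨a, b, rfl, ha, hb⟩ := decomp_of_acyc _ (acyc_self (k := k) (G := Coprod G₁ G₂) (V := V)) v
  refine ⟨_, _, map_add _ a b, fun x => ?_, fun x => ?_⟩
  · rw [← quo_mk, ha]
  · rw [← quo_mk, hb]

theorem inj_all (n : ℕ) : ∀ {V : Type u} [AddCommGroup V] [Module k V]
    (ρ : Representation k (Coprod G₁ G₂) V), InjP Coprod.inl Coprod.inr ρ (n + 1) := by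
  induction n with
  | zero =>
    intro V _ _ ρ
    exact inj_shift _ _ ρ _ (quo ρ) (emb ρ) _ (emb_equivariant ρ) (quo_mk ρ) (emb_injective ρ)
      (Submodule.mkQ_surjective _) (mkQ_exact ρ) (mkQ_emb ρ) acyc_self acyc_inl acyc_inr 0
      (inj_base _ (decomp_quo ρ))
  | succ n ih =>
    intro V _ _ ρ
    exact inj_shift _ _ ρ _ (quo ρ) (emb ρ) _ (emb_equivariant ρ) (quo_mk ρ) (emb_injective ρ)
      (Submodule.mkQ_surjective _) (mkQ_exact ρ) (mkQ_emb ρ) acyc_self acyc_inl acyc_inr _ (ih _)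

end main

section bridge

/-- The class of a cocycle. -/
noncomputable def cls (A : Rep k G) (n : ℕ) (c : (Fin n → G) → A) (hc : D A.ρ n c = 0) :
    groupCohomology A n :=
  groupCohomology.π A n (groupCohomology.cocyclesMk c hc)

lemma cls_surj (A : Rep k G) (n : ℕ) (x : groupCohomology A n) : ∃ c hc, x = cls A n c hc := by
  induction x using groupCohomology_induction_on with
  | h x =>
    have hx : D A.ρ n (groupCohomology.iCocycles A n x) = 0 := by
      have := congrArg (fun f => f.hom x)
        ((groupCohomology.inhomogeneousCochains A).iCycles_d n (n + 1))
      rw [groupCohomology.inhomogeneousCochains.d_def] at this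
      exact this
    refine ⟨groupCohomology.iCocycles A n x, hx, ?_⟩
    unfold cls
    congr 1
    apply (ModuleCat.mono_iff_injective (groupCohomology.iCocycles A n)).1 inferInstance
    exact (groupCohomology.iCocycles_mk _ hx).symm

lemma cls_eq_zero_iff (A : Rep k G) (n : ℕ) (c : (Fin (n + 1) → G) → A)
    (hc : D A.ρ (n + 1) c = 0) :
    cls A (n + 1) c hc = 0 ↔ ∃ b, D A.ρ n b = c := by
  let K := groupCohomology.inhomogeneousCochains A
  have hex : (ShortComplex.mk (K.toCycles n (n + 1)) (K.homologyπ (n + 1)) (by simp)).Exact :=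
    ShortComplex.exact_of_g_is_cokernel _ (K.homologyIsCokernel n (n + 1) (by simp))
  have hti : ∀ b, groupCohomology.iCocycles A (n + 1) (K.toCycles n (n + 1) b) = D A.ρ n b := by
    intro b
    have := congrArg (fun f => f.hom b) (K.toCycles_i n (n + 1))
    rw [groupCohomology.inhomogeneousCochains.d_def] at this
    exact this
  have hm := groupCohomology.iCocycles_mk c hc
  constructor
  · intro h
    obtain ⟨b, hb⟩ := (ShortComplex.moduleCat_exact_iff _).1 hex _ h
    refine ⟨b, ?_⟩
    rw [← hti, ← hm]
    exact congrArg _ hb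
  · rintro ⟨b, hb⟩
    have : groupCohomology.cocyclesMk c hc = K.toCycles n (n + 1) b := by
      apply (ModuleCat.mono_iff_injective (groupCohomology.iCocycles A (n + 1))).1 inferInstance
      rw [hti, hb]
      exact hm
    unfold cls
    rw [this]
    exact congrArg (fun f => f.hom b) (K.toCycles_comp_homologyπ n (n + 1))

lemma cls_sub (A : Rep k G) (n : ℕ) (c c' : (Fin n → G) → A)
    (hc : D A.ρ n c = 0) (hc' : D A.ρ n c' = 0) :
    cls A n c hc - cls A n c' hc' = cls A n (c - c') (by rw [map_sub, hc, hc', sub_zero]) := by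
  unfold cls
  rw [← map_sub]
  congr 1
  apply (ModuleCat.mono_iff_injective (groupCohomology.iCocycles A n)).1 inferInstance
  rw [map_sub]
  erw [groupCohomology.iCocycles_mk, groupCohomology.iCocycles_mk, groupCohomology.iCocycles_mk]

lemma cls_eq_iff (A : Rep k G) (n : ℕ) (c c' : (Fin (n + 1) → G) → A)
    (hc : D A.ρ (n + 1) c = 0) (hc' : D A.ρ (n + 1) c' = 0) :
    cls A (n + 1) c hc = cls A (n + 1) c' hc' ↔ ∃ b, D A.ρ n b = c - c' := by
  rw [← sub_eq_zero, cls_sub, cls_eq_zero_iff]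

lemma res_cls (f : H →* G) (A : Rep k G) (n : ℕ) (c : (Fin n → G) → A)
    (hc : D A.ρ n c = 0) :
    cohomologyRes f A n (cls A n c hc) = cls (Rep.of (A.ρ.comp f)) n (fun y => c (⇑f ∘ y))
      (by rw [D_res, hc]; rfl) := by
  have h := congrArg (fun t => t.hom (groupCohomology.cocyclesMk c hc))
    (HomologicalComplex.homologyπ_naturality (cochainsRes f A) n)
  refine h.trans ?_
  change groupCohomology.π _ n _ = groupCohomology.π _ n _
  congr 1
  apply (ModuleCat.mono_iff_injective (groupCohomology.iCocycles _ n)).1 inferInstance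
  have h2 := congrArg (fun t => t.hom (groupCohomology.cocyclesMk c hc))
    (HomologicalComplex.cyclesMap_i (cochainsRes f A) n)
  refine h2.trans ?_
  refine Eq.trans ?_ (groupCohomology.iCocycles_mk _ _).symm
  change (cochainsRes f A).f n (groupCohomology.iCocycles A n (groupCohomology.cocyclesMk c hc)) = _
  rw [groupCohomology.iCocycles_mk c hc]
  rfl

end bridge

end FreeProdCoh

/-- Mayer–Vietoris for a free product `G = G₁ * G₂`: for every representation `M` of `G`
over a commutative ring `k`, the map `Hⁿ(G, M) → Hⁿ(G₁, M) × Hⁿ(G₂, M)` whose components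
are the restriction maps along the canonical inclusions is bijective for every `n ≥ 2`,
and for `n = 1` it is surjective. -/
theorem free_product_cohomology_restriction_bijective
    (k G₁ G₂ : Type u) [CommRing k] [Group G₁] [Group G₂]
    (M : Rep k (Monoid.Coprod G₁ G₂)) :
    (∀ n : ℕ, 2 ≤ n →
      Function.Bijective (fun x : groupCohomology M n =>
        (cohomologyRes Monoid.Coprod.inl M n x, cohomologyRes Monoid.Coprod.inr M n x))) ∧
    Function.Surjective (fun x : groupCohomology M 1 =>
      (cohomologyRes Monoid.Coprod.inl M 1 x, cohomologyRes Monoid.Coprod.inr M 1 x)) := by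
  have hsurj : ∀ n : ℕ, Function.Surjective (fun x : groupCohomology M (n + 1) =>
      (cohomologyRes Monoid.Coprod.inl M (n + 1) x,
        cohomologyRes Monoid.Coprod.inr M (n + 1) x)) := by
    rintro n ⟨x₁, x₂⟩
    obtain ⟨c₁, hc₁, rfl⟩ := FreeProdCoh.cls_surj _ _ x₁
    obtain ⟨c₂, hc₂, rfl⟩ := FreeProdCoh.cls_surj _ _ x₂
    obtain ⟨c, b₁, b₂, hc, h₁, h₂⟩ := FreeProdCoh.surj_all n M.ρ c₁ c₂ hc₁ hc₂
    refine ⟨FreeProdCoh.cls M _ c hc, ?_⟩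
    refine Prod.ext ?_ ?_
    · refine (FreeProdCoh.res_cls _ _ _ _ _).trans ?_
      rw [FreeProdCoh.cls_eq_iff]
      exact ⟨b₁, by rw [h₁]; exact (add_sub_cancel_left _ _).symm⟩
    · refine (FreeProdCoh.res_cls _ _ _ _ _).trans ?_
      rw [FreeProdCoh.cls_eq_iff]
      exact ⟨b₂, by rw [h₂]; exact (add_sub_cancel_left _ _).symm⟩
  refine ⟨fun n hn => ⟨?_, ?_⟩, hsurj 0⟩
  · obtain ⟨n, rfl⟩ := Nat.exists_eq_add_of_le' hn
    intro x y hxy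
    simp only [Prod.mk.injEq] at hxy
    rw [← sub_eq_zero]
    have e₁ : cohomologyRes Monoid.Coprod.inl M (n + 2) (x - y) = 0 := by
      rw [map_sub, hxy.1, sub_self]
    have e₂ : cohomologyRes Monoid.Coprod.inr M (n + 2) (x - y) = 0 := by
      rw [map_sub, hxy.2, sub_self]
    generalize x - y = z at e₁ e₂
    obtain ⟨c, hc, rfl⟩ := FreeProdCoh.cls_surj _ _ z
    rw [FreeProdCoh.res_cls, FreeProdCoh.cls_eq_zero_iff] at e₁ e₂
    obtain ⟨b₁, hb₁⟩ := e₁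
    obtain ⟨b₂, hb₂⟩ := e₂
    rw [FreeProdCoh.cls_eq_zero_iff]
    exact FreeProdCoh.inj_all n M.ρ c b₁ b₂ hc hb₁.symm hb₂.symm
  · obtain ⟨n, rfl⟩ := Nat.exists_eq_add_of_le' hn
    exact hsurj (n + 1)
end

section
/- Let k be a commutative ring, G a finite group whose order (as an element of k) is invertible in k, and M a representation of G over k. Then Hⁱ(G, M) = 0 for all i ≥ 1, i.e. the group cohomology of G with coefficients in M is trivial in all positive degrees. -/
open CategoryTheory

universe u

theorem trivial_projective_aux
    (k G : Type u) [CommRing k] [Group G] [Finite G]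
    (h : IsUnit ((Nat.card G : k))) : Projective (Rep.trivial k G k : Rep.{u} k G) := by
  cases nonempty_fintype G
  obtain ⟨u, hu⟩ := h
  refine ⟨fun {E X} f e _ => ?_⟩
  obtain ⟨y, hy⟩ := (Rep.epi_iff_surjective e).1 inferInstance (f.hom (1 : k))
  have hinv : ∀ g : G, X.ρ g (f.hom (1 : k)) = f.hom (1 : k) := fun g =>
    (Rep.hom_comm_apply f g (1 : k)).symm
  let w : E := ((u⁻¹ : kˣ) : k) • ∑ g : G, E.ρ g y
  have hw : ∀ g : G, E.ρ g w = w := by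
    intro g
    simp only [w, map_smul, map_sum]
    congr 1
    have h1 : ∀ x : G, E.ρ g (E.ρ x y) = E.ρ (g * x) y := fun x => by simp
    simp only [h1]
    exact Function.Bijective.sum_comp (Group.mulLeft_bijective g) (fun x => E.ρ x y)
  have hew : e.hom w = f.hom (1 : k) := by
    simp only [w, map_smul, map_sum, Rep.hom_comm_apply, hy, hinv]
    rw [Finset.sum_const, Finset.card_univ, ← Nat.card_eq_fintype_card,
      ← Nat.cast_smul_eq_nsmul k, ← hu, smul_smul, Units.inv_mul, one_smul]
  refine ⟨Rep.ofHom (ρ := Representation.trivial k G k) (σ := E.ρ)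
    ⟨LinearMap.toSpanSingleton k E w, fun g => ?_⟩, ?_⟩
  · ext
    simp [hw]
  · ext
    simpa using hew

/-- If `G` is a finite group whose order is invertible in the commutative ring `k`, then the
group cohomology `Hⁱ(G, M)` of any representation `M` of `G` over `k` vanishes for all
`i ≥ 1`. -/
theorem groupCohomology_isZero_of_isUnit_card
    (k G : Type u) [CommRing k] [Group G] [Finite G]
    (h : IsUnit ((Nat.card G : k))) (M : Rep k G) :
    ∀ i : ℕ, 1 ≤ i → Limits.IsZero (groupCohomology M i) := by
  intro i hi
  obtain ⟨n, rfl⟩ := Nat.exists_eq_add_of_le' hi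
  haveI := trivial_projective_aux k G h
  exact (isZero_Ext_succ_of_projective (Rep.trivial k G k) M n).of_iso <|
    groupCohomologyIsoExt _ _
end

section
/- Let K be a field which is either of characteristic 0 or finite. Let A be a nontrivial finite-dimensional commutative K-algebra admitting a K-basis a₁, …, a_n such that, for every i, the minimal polynomial of a_i over K equals p_i^{e_i} for some irreducible polynomial p_i ∈ K[X] and some positive integer e_i. Then A is a local ring. -/
open Polynomial IntermediateField in
/-- Elements with the same minimal polynomial have proportional traces. -/
lemma aux_trace (K L M : Type*) [Field K] [Field L] [Field M] [Algebra K L] [Algebra K M]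
    [FiniteDimensional K L] [FiniteDimensional K M]
    (x : L) (y : M) (hxy : minpoly K x = minpoly K y)
    (hK : CharZero K ∨ Module.finrank K L = Module.finrank K M) :
    ∀ c d : K, ((c = Module.finrank K M ∧ d = Module.finrank K L) ∨
      (c = 1 ∧ d = 1 ∧ Module.finrank K L = Module.finrank K M)) →
    c * Algebra.trace K L x = d * Algebra.trace K M y := by
  intro c d hcd
  have h1 := Module.finrank_mul_finrank K K⟮x⟯ L
  have h2 := Module.finrank_mul_finrank K K⟮y⟯ M
  rw [adjoin.finrank (.of_finite K x)] at h1
  rw [adjoin.finrank (.of_finite K y), ← hxy] at h2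
  have hpos : 0 < (minpoly K x).natDegree := minpoly.natDegree_pos (.of_finite K x)
  rw [trace_eq_finrank_mul_minpoly_nextCoeff, trace_eq_finrank_mul_minpoly_nextCoeff, ← hxy]
  rcases hcd with ⟨rfl, rfl⟩ | ⟨rfl, rfl, e⟩
  · rw [← h1, ← h2]
    push_cast
    ring
  · rw [← h1, ← h2] at e
    rw [Nat.eq_of_mul_eq_mul_left hpos e]

/-- Over a finite field, the residue degrees divide each other. -/
lemma aux_finite (K A L M : Type*) [Field K] [Finite K] [CommRing A] [Algebra K A]
    [Field L] [Field M] [Algebra K L] [Algebra K M]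
    [FiniteDimensional K L] [FiniteDimensional K M]
    (f : A →ₐ[K] L) (g : A →ₐ[K] M) (hf : Function.Surjective f)
    {n : ℕ} (b : Module.Basis (Fin n) K A)
    (h : ∀ i, minpoly K (f (b i)) = minpoly K (g (b i))) :
    Module.finrank K L ∣ Module.finrank K M := by
  have := Fintype.ofFinite K
  have : Finite L := Module.finite_of_finite K
  have : Finite M := Module.finite_of_finite K
  have := Fintype.ofFinite M
  rw [← FiniteField.orderOf_frobeniusAlgHom K L]
  apply orderOf_dvd_of_pow_eq_one
  have key : ((FiniteField.frobeniusAlgHom K L ^ Module.finrank K M).comp f).toLinearMap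
      = f.toLinearMap := by
    refine b.ext fun i => ?_
    have h0 : Polynomial.aeval (g (b i))
        (Polynomial.X ^ (Fintype.card K ^ Module.finrank K M) - Polynomial.X :
          Polynomial K) = 0 := by
      simp [← Module.card_eq_pow_finrank (K := K) (V := M), FiniteField.pow_card]
    have h1 := minpoly.dvd K _ h0
    rw [← h i] at h1
    have h2 := (Polynomial.aeval_eq_zero_of_dvd_aeval_eq_zero h1 (minpoly.aeval K _))
    simp only [map_sub, map_pow, Polynomial.aeval_X, sub_eq_zero] at h2
    simpa [AlgHom.coe_pow, FiniteField.coe_frobeniusAlgHom, pow_iterate] using h2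
  ext x
  obtain ⟨a, rfl⟩ := hf x
  exact LinearMap.congr_fun key a

/-- Two distinct maximal ideals lead to a contradiction. -/
lemma aux_core (K A L M : Type*) [Field K] [CommRing A] [Algebra K A]
    [Field L] [Field M] [Algebra K L] [Algebra K M]
    [FiniteDimensional K L] [FiniteDimensional K M] [PerfectField K]
    (hK : CharZero K ∨ Finite K)
    (f : A →ₐ[K] L) (g : A →ₐ[K] M) (hf : Function.Surjective f) (hg : Function.Surjective g)
    (e : A) (he : f e = 1) (he' : g e = 0)
    {n : ℕ} (b : Module.Basis (Fin n) K A)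
    (h : ∀ i, minpoly K (f (b i)) = minpoly K (g (b i))) : False := by
  obtain ⟨c, d, hc, hcd⟩ : ∃ c d : K, c ≠ 0 ∧
      ∀ i, c * Algebra.trace K L (f (b i)) = d * Algebra.trace K M (g (b i)) := by
    rcases hK with hK | hK
    · exact ⟨Module.finrank K M, Module.finrank K L,
        Nat.cast_ne_zero.2 Module.finrank_pos.ne', fun i =>
        aux_trace K L M _ _ (h i) (.inl hK) _ _ (.inl ⟨rfl, rfl⟩)⟩
    · have hd : Module.finrank K L = Module.finrank K M :=
        Nat.dvd_antisymm (aux_finite K A L M f g hf b h)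
          (aux_finite K A M L g f hg b fun i => (h i).symm)
      exact ⟨1, 1, one_ne_zero, fun i =>
        aux_trace K L M _ _ (h i) (.inr hd) _ _ (.inr ⟨rfl, rfl, hd⟩)⟩
  have key : c • (Algebra.trace K L ∘ₗ f.toLinearMap)
      = d • (Algebra.trace K M ∘ₗ g.toLinearMap) :=
    b.ext fun i => by simpa using hcd i
  apply Algebra.trace_ne_zero K L
  ext x
  obtain ⟨a, rfl⟩ := hf x
  have := LinearMap.congr_fun key (a * e)
  simpa [he, he', hc] using this

/-- In a field quotient, the minimal polynomial is the normalized irreducible factor. -/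
lemma aux_minpoly (K A L : Type*) [Field K] [CommRing A] [Algebra K A]
    [Field L] [Algebra K L] (f : A →ₐ[K] L) (a : A) (p : Polynomial K) (e : ℕ)
    (hp : Irreducible p) (h : minpoly K a = p ^ e) :
    minpoly K (f a) = p * Polynomial.C p.leadingCoeff⁻¹ := by
  refine (minpoly.eq_of_irreducible hp ?_).symm
  have h1 : Polynomial.aeval (f a) (p ^ e) = 0 := by
    rw [← h, Polynomial.aeval_algHom_apply, minpoly.aeval, map_zero]
  rw [map_pow] at h1
  exact eq_zero_of_pow_eq_zero h1

/-- Let `K` be a field of characteristic `0` or a finite field, and let `A` be a nontrivial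
finite-dimensional commutative `K`-algebra admitting a `K`-basis each of whose elements has a
minimal polynomial over `K` that is a power of an irreducible polynomial. Then `A` is local. -/
theorem isLocalRing_of_basis_minpoly_primePow
    (K A : Type*) [Field K] [CommRing A] [Algebra K A] [Nontrivial A] [FiniteDimensional K A]
    (hK : CharZero K ∨ Finite K) {n : ℕ} (b : Module.Basis (Fin n) K A)
    (h : ∀ i : Fin n, ∃ (p : Polynomial K) (e : ℕ),
      Irreducible p ∧ 0 < e ∧ minpoly K (b i) = p ^ e) :
    IsLocalRing A := by
  have hperf : PerfectField K := by
    rcases hK with hK | hK <;> infer_instance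
  obtain ⟨I, hI⟩ := Ideal.exists_maximal A
  refine IsLocalRing.of_unique_max_ideal ⟨I, hI, fun J hJ => ?_⟩
  by_contra hne
  have hJ : J.IsMaximal := hJ
  obtain ⟨x, hx, y, hy, hxy⟩ := Ideal.isCoprime_iff_exists.1 (Ideal.isCoprime_of_isMaximal hne)
  letI := Ideal.Quotient.field I
  letI := Ideal.Quotient.field J
  refine aux_core K A (A ⧸ I) (A ⧸ J) hK (Ideal.Quotient.mkₐ K I) (Ideal.Quotient.mkₐ K J)
    (Ideal.Quotient.mkₐ_surjective K I) (Ideal.Quotient.mkₐ_surjective K J) x ?_ ?_ b ?_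
  · have : Ideal.Quotient.mk I y = 0 := Ideal.Quotient.eq_zero_iff_mem.2 hy
    have h2 := congrArg (Ideal.Quotient.mk I) hxy
    rw [map_add, this, add_zero, map_one] at h2
    exact h2
  · exact Ideal.Quotient.eq_zero_iff_mem.2 hx
  · intro i
    obtain ⟨p, e, hp, -, hpe⟩ := h i
    exact (aux_minpoly K A (A ⧸ I) (Ideal.Quotient.mkₐ K I) _ p e hp hpe).trans
      (aux_minpoly K A (A ⧸ J) (Ideal.Quotient.mkₐ K J) _ p e hp hpe).symm
end

section
/- Let K be a field and A a nontrivial finite-dimensional commutative K-algebra. Then A is a local ring if and only if for every a ∈ A the minimal polynomial of a over K is a prime power, i.e. equals p^e for some irreducible polynomial p ∈ K[X] and some positive integer e. -/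
/-- A nontrivial finite-dimensional commutative algebra `A` over a field `K` is local if and
only if the minimal polynomial over `K` of every element of `A` is a prime power, i.e. a power
`p^e` of an irreducible polynomial `p ∈ K[X]` with `e ≥ 1`. -/
theorem isLocalRing_iff_minpoly_primePow
    (K A : Type*) [Field K] [CommRing A] [Algebra K A] [Nontrivial A] [FiniteDimensional K A] :
    IsLocalRing A ↔ ∀ a : A, ∃ (p : Polynomial K) (e : ℕ),
      Irreducible p ∧ 0 < e ∧ minpoly K a = p ^ e := by
  constructor
  · intro hloc a
    have hart : IsArtinianRing A := IsArtinianRing.of_finite K A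
    have hint : IsIntegral K a := IsIntegral.of_finite K a
    let f : A →ₐ[K] A ⧸ IsLocalRing.maximalIdeal A := Ideal.Quotient.mkₐ K _
    have hint2 : IsIntegral K (f a) := hint.map f
    have hirr : Irreducible (minpoly K (f a)) := minpoly.irreducible hint2
    have hmem : Polynomial.aeval a (minpoly K (f a)) ∈ IsLocalRing.maximalIdeal A := by
      have h : f (Polynomial.aeval a (minpoly K (f a))) = 0 := by
        rw [← Polynomial.aeval_algHom_apply, minpoly.aeval]
      exact Ideal.Quotient.eq_zero_iff_mem.mp h
    obtain ⟨n, hn⟩ : IsNilpotent (Polynomial.aeval a (minpoly K (f a))) := by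
      obtain ⟨n, hn⟩ := IsArtinianRing.isNilpotent_jacobson_bot (R := A)
      refine ⟨n, ?_⟩
      rw [IsLocalRing.jacobson_eq_maximalIdeal _ bot_ne_top] at hn
      have := Ideal.pow_mem_pow hmem n
      rw [hn] at this
      exact this
    have hdvd : minpoly K a ∣ minpoly K (f a) ^ n := minpoly.dvd K a (by rw [map_pow, hn])
    obtain ⟨e, -, he⟩ := (dvd_prime_pow hirr.prime n).mp hdvd
    have heq := Polynomial.eq_of_monic_of_associated (minpoly.monic hint)
      ((minpoly.monic hint2).pow e) he
    refine ⟨_, e, hirr, Nat.pos_of_ne_zero ?_, heq⟩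
    rintro rfl
    exact minpoly.ne_one K a (by simpa using heq)
  · intro h
    refine IsLocalRing.of_isUnit_or_isUnit_one_sub_self fun a => ?_
    obtain ⟨p, e, hp, -, he⟩ := h a
    have h0 : Polynomial.aeval a (p ^ e) = 0 := by rw [← he, minpoly.aeval]
    rcases dvd_or_isCoprime p Polynomial.X hp with hd | hc
    · right
      have : a ^ e = 0 := by
        obtain ⟨c, hc⟩ := pow_dvd_pow_of_dvd hd e
        have := congrArg (Polynomial.aeval a) hc
        rwa [map_mul, h0, zero_mul, map_pow, Polynomial.aeval_X] at this
      exact IsNilpotent.isUnit_one_sub ⟨e, this⟩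
    · left
      obtain ⟨u, v, huv⟩ := hc.pow_left (m := e)
      have := congrArg (Polynomial.aeval a) huv
      rw [map_add, map_mul, h0, map_mul, Polynomial.aeval_X, mul_zero, zero_add, map_one] at this
      exact IsUnit.of_mul_eq_one_right _ this
end

section
/- Let K be a perfect field and A a finite-dimensional commutative local K-algebra. Suppose a₁, …, a_n generate A as a K-algebra (the K-subalgebra generated by {a₁,…,a_n} is all of A) and that, for every i, the minimal polynomial of a_i over K is irreducible. Then A is a field. -/
/-- Let `K` be a perfect field and `A` a finite-dimensional commutative local `K`-algebra.
If `A` is generated as a `K`-algebra by elements `a₁, …, aₙ` whose minimal polynomials over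
`K` are irreducible, then `A` is a field. -/
theorem isField_of_local_irreducible_minpoly_generators
    (K A : Type*) [Field K] [PerfectField K] [CommRing A] [Algebra K A]
    [FiniteDimensional K A] [IsLocalRing A]
    {n : ℕ} (a : Fin n → A) (hgen : Algebra.adjoin K (Set.range a) = ⊤)
    (hirr : ∀ i, Irreducible (minpoly K (a i))) :
    IsField A := by
  have h0 : ∀ i, KaehlerDifferential.D K A (a i) = 0 := by
    intro i
    have hsep : (minpoly K (a i)).Separable := PerfectField.separable_of_irreducible (hirr i)
    obtain ⟨u, v, huv⟩ := hsep
    have h1 := congrArg (Polynomial.aeval (a i)) huv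
    simp only [map_add, map_mul, minpoly.aeval, mul_zero, zero_add, map_one] at h1
    have h2 := (KaehlerDifferential.D K A).map_aeval (minpoly K (a i)) (a i)
    rw [minpoly.aeval, map_zero] at h2
    rw [← one_smul A (KaehlerDifferential.D K A (a i)), ← h1, mul_smul, ← h2, smul_zero]
  have hD : KaehlerDifferential.D K A = 0 := by
    apply Derivation.ext_of_adjoin_eq_top _ hgen
    rintro _ ⟨i, rfl⟩
    simpa using h0 i
  have hU : Algebra.FormallyUnramified K A := by
    rw [Algebra.formallyUnramified_iff]
    have h := KaehlerDifferential.span_range_derivation K A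
    rw [hD] at h
    apply (Submodule.subsingleton_iff A).mp
    apply subsingleton_of_bot_eq_top
    rw [← h, eq_comm, Submodule.span_eq_bot]
    rintro _ ⟨x, rfl⟩
    rfl
  have := Algebra.FormallyUnramified.isReduced_of_field K A
  have : IsArtinianRing A := IsArtinianRing.of_finite K A
  exact IsArtinianRing.isField_of_isReduced_of_isLocalRing A
end

section
/- Let K be a perfect field and A a finite-dimensional commutative local K-algebra with maximal ideal 𝔪. Let a₁, …, a_n generate A as a K-algebra, and for each i write the minimal polynomial of a_i over K as p_i^{e_i} with p_i ∈ K[X] irreducible and e_i ≥ 1. Then 𝔪 is the ideal of A generated by the elements p₁(a₁), …, p_n(a_n). -/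
/-- Let `K` be a perfect field and `A` a finite-dimensional commutative local `K`-algebra
with maximal ideal `𝔪`. If `a₁, …, aₙ` generate `A` as a `K`-algebra and the minimal
polynomial of each `aᵢ` is `pᵢ^{eᵢ}` with `pᵢ` irreducible and `eᵢ ≥ 1`, then `𝔪` is
generated (as an ideal) by the elements `p₁(a₁), …, pₙ(aₙ)`. -/
theorem maximalIdeal_eq_span_of_minpoly_primePow
    (K A : Type*) [Field K] [PerfectField K] [CommRing A] [Algebra K A]
    [FiniteDimensional K A] [IsLocalRing A]
    {n : ℕ} (a : Fin n → A) (p : Fin n → Polynomial K) (e : Fin n → ℕ)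
    (hgen : Algebra.adjoin K (Set.range a) = ⊤)
    (hp : ∀ i, Irreducible (p i)) (he : ∀ i, 1 ≤ e i)
    (hmin : ∀ i, minpoly K (a i) = p i ^ e i) :
    IsLocalRing.maximalIdeal A =
      Ideal.span (Set.range fun i => Polynomial.aeval (a i) (p i)) := by
  set I := Ideal.span (Set.range fun i => Polynomial.aeval (a i) (p i)) with hI
  have hle : I ≤ IsLocalRing.maximalIdeal A := by
    rw [hI, Ideal.span_le]
    rintro _ ⟨i, rfl⟩
    have h0 : (Polynomial.aeval (a i) (p i)) ^ (e i) = 0 := by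
      rw [← map_pow, ← hmin i, minpoly.aeval]
    have : (Polynomial.aeval (a i) (p i)) ^ (e i) ∈ IsLocalRing.maximalIdeal A := by
      rw [h0]; exact zero_mem _
    exact Ideal.IsPrime.mem_of_pow_mem inferInstance _ this
  have hne : I ≠ ⊤ := fun h => (IsLocalRing.maximalIdeal.isMaximal A).ne_top
    (top_le_iff.mp (h ▸ hle))
  have : Nontrivial (A ⧸ I) := Ideal.Quotient.nontrivial_iff.mpr hne
  have : IsLocalRing (A ⧸ I) :=
    IsLocalRing.of_surjective' (Ideal.Quotient.mk I) Ideal.Quotient.mk_surjective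
  let b : Fin n → A ⧸ I := fun i => Ideal.Quotient.mkₐ K I (a i)
  have hb : ∀ i, Polynomial.aeval (b i) (p i) = 0 := by
    intro i
    change Polynomial.aeval (Ideal.Quotient.mkₐ K I (a i)) (p i) = 0
    rw [Polynomial.aeval_algHom_apply]
    exact Ideal.Quotient.eq_zero_iff_mem.mpr (Ideal.subset_span ⟨i, rfl⟩)
  have hbgen : Algebra.adjoin K (Set.range b) = ⊤ := by
    have : Set.range b = (Ideal.Quotient.mkₐ K I) '' (Set.range a) := by
      rw [← Set.range_comp]; rfl
    rw [this, ← AlgHom.map_adjoin, hgen, Algebra.map_top]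
    exact (AlgHom.range_eq_top _).mpr (Ideal.Quotient.mkₐ_surjective K I)
  have hD : KaehlerDifferential.D K (A ⧸ I) = 0 := by
    apply Derivation.ext_of_adjoin_eq_top _ hbgen
    rintro _ ⟨i, rfl⟩
    obtain ⟨u, v, huv⟩ := PerfectField.separable_of_irreducible (hp i)
    have h1 : Polynomial.aeval (b i) v * Polynomial.aeval (b i) (Polynomial.derivative (p i)) = 1 := by
      have := congrArg (Polynomial.aeval (b i)) huv
      simpa [hb i] using this
    have h2 := Derivation.map_aeval (KaehlerDifferential.D K (A ⧸ I)) (p i) (b i)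
    rw [hb i, map_zero] at h2
    have h3 := congrArg (fun x => Polynomial.aeval (b i) v • x) h2
    simp only [smul_zero, smul_smul, h1, one_smul] at h3
    simpa using h3.symm
  have : Subsingleton (KaehlerDifferential K (A ⧸ I)) := by
    have hs := KaehlerDifferential.span_range_derivation K (A ⧸ I)
    rw [hD] at hs
    refine (Submodule.subsingleton_iff (A ⧸ I)).mp (subsingleton_of_bot_eq_top ?_)
    rw [← hs, eq_comm, Submodule.span_eq_bot]
    rintro _ ⟨x, rfl⟩
    rfl
  have : Algebra.FormallyUnramified K (A ⧸ I) := ⟨this⟩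
  have : IsReduced (A ⧸ I) := Algebra.FormallyUnramified.isReduced_of_field K (A ⧸ I)
  have : IsArtinianRing (A ⧸ I) := IsArtinianRing.of_finite K _
  have hf : IsField (A ⧸ I) := IsArtinianRing.isField_of_isReduced_of_isLocalRing _
  exact (IsLocalRing.eq_maximalIdeal (Ideal.Quotient.maximal_of_isField I hf)).symm
end

section
/- Let 𝒪 be an integral domain of characteristic zero which is finitely generated as a ℤ-module, and let T be a nontrivial commutative 𝒪-algebra which is finitely generated and torsion-free as an 𝒪-module. Then T is pure of Krull dimension 1: the Krull dimension of T equals 1, and every maximal ideal of T strictly contains some prime ideal of T (i.e. every maximal ideal has height 1). -/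
/-- Let `𝒪` be an integral domain of characteristic zero which is finitely generated as a
`ℤ`-module, and let `T` be a nontrivial commutative `𝒪`-algebra which is finitely generated
and torsion-free as an `𝒪`-module. Then `T` is pure of Krull dimension `1`: its Krull
dimension is `1` and every maximal ideal of `T` strictly contains a prime ideal. -/
theorem heckeAlgebra_pure_krullDim_one
    (𝒪 T : Type*) [CommRing 𝒪] [IsDomain 𝒪] [CharZero 𝒪] [Module.Finite ℤ 𝒪]
    [CommRing T] [Nontrivial T] [Algebra 𝒪 T] [Module.Finite 𝒪 T] [NoZeroSMulDivisors 𝒪 T] :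
    ringKrullDim T = 1 ∧
      ∀ 𝔪 : Ideal T, 𝔪.IsMaximal → ∃ 𝔭 : Ideal T, 𝔭.IsPrime ∧ 𝔭 < 𝔪 := by
  have hfin : Module.Finite ℤ T := Module.Finite.trans 𝒪 T
  have htf : Module.IsTorsionFree ℤ T := by
    refine Module.isTorsionFree_iff_smul_eq_zero.mpr ?_
    intro n x h
    have h2 : (n : 𝒪) • x = 0 := by rw [Int.cast_smul_eq_zsmul]; exact h
    rcases NoZeroSMulDivisors.eq_zero_or_eq_zero_of_smul_eq_zero h2 with h3 | h3
    · left; exact_mod_cast h3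
    · right; exact h3
  have hint : Algebra.IsIntegral ℤ T := inferInstance
  have hflat : Module.Flat ℤ T := inferInstance
  have hinj : FaithfulSMul ℤ T := inferInstance
  have key : ∀ m : Ideal T, m.IsMaximal → ∃ P : Ideal T, P.IsPrime ∧ P < m := by
    intro m hm
    have hmax : (m.under ℤ).IsMaximal := Ideal.isMaximal_comap_of_isIntegral_of_isMaximal m
    have hlt : (⊥ : Ideal ℤ) < m.under ℤ :=
      Ideal.bot_lt_of_maximal _ Int.not_isField
    obtain ⟨P, h1, h2, h3⟩ := Ideal.exists_ideal_lt_liesOver_of_lt m hlt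
    exact ⟨P, h2, h1⟩
  refine ⟨?_, key⟩
  apply eq_of_le_of_not_lt
  · rw [← IsPrincipalIdealRing.ringKrullDim_eq_one ℤ Int.not_isField]
    refine Order.krullDim_le_of_strictMono (PrimeSpectrum.comap (algebraMap ℤ T)) ?_
    intro I J h
    exact Ideal.IsIntegral.comap_lt_comap (R := ℤ) (I := I.asIdeal) (J := J.asIdeal) h
  · intro h
    have h0 : ringKrullDim T ≤ 0 := Order.le_of_lt_succ h
    rw [← Nat.cast_zero, ← Ring.krullDimLE_iff] at h0
    obtain ⟨m, hm⟩ := Ideal.exists_maximal T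
    obtain ⟨P, hP, hlt⟩ := key m hm
    exact hm.ne_top (hP.isMaximal'.1.2 m hlt)
end

section
/- Let T be a commutative ring which is finitely generated and torsion-free as a ℤ-module, let p be a prime number, and let f̄ : T → 𝔽̄_p be a ring homomorphism into an algebraic closure 𝔽̄_p of the field with p elements. Then there exist a ring homomorphism f : T → ℤ̄, where ℤ̄ is the integral closure of ℤ in an algebraic closure ℚ̄ of ℚ, and a ring homomorphism π : ℤ̄ → 𝔽̄_p, such that π ∘ f = f̄. -/
/-- Deligne–Serre lifting lemma (algebraic form). Let `T` be a commutative ring which is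
finitely generated and torsion-free as a `ℤ`-module, `p` a prime, and `f̄ : T → 𝔽̄ₚ` a ring
homomorphism. Then `f̄` factors as `π ∘ f` for a ring homomorphism `f : T → ℤ̄` into the
integral closure `ℤ̄` of `ℤ` in `ℚ̄` and a ring homomorphism `π : ℤ̄ → 𝔽̄ₚ`. -/
theorem deligne_serre_lifting
    (T : Type*) [CommRing T] [Module.Finite ℤ T] [NoZeroSMulDivisors ℤ T]
    (p : ℕ) [Fact p.Prime] (fbar : T →+* AlgebraicClosure (ZMod p)) :
    ∃ (f : T →+* integralClosure ℤ (AlgebraicClosure ℚ))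
      (π : integralClosure ℤ (AlgebraicClosure ℚ) →+* AlgebraicClosure (ZMod p)),
      π.comp f = fbar := by
  classical
  let F := AlgebraicClosure (ZMod p)
  let Z := integralClosure ℤ (AlgebraicClosure ℚ)
  let Q : Ideal T := RingHom.ker fbar
  have hQ : Q.IsPrime := RingHom.ker_isPrime fbar
  obtain ⟨P, hPmin, hPQ⟩ := Ideal.exists_minimalPrimes_le (I := (⊥ : Ideal T)) (J := Q) bot_le
  have hP : P.IsPrime := hPmin.1.1
  have hdisj := Ideal.disjoint_nonZeroDivisors_of_mem_minimalPrimes (p := P) hPmin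
  have hinj : Function.Injective (algebraMap ℤ (T ⧸ P)) := by
    rw [injective_iff_map_eq_zero]
    intro n hn
    by_contra hne
    have h1 : algebraMap ℤ T n ∈ P := by
      rw [← Ideal.Quotient.eq_zero_iff_mem]
      simpa using hn
    refine Set.disjoint_left.mp hdisj h1 ?_
    rw [SetLike.mem_coe, mem_nonZeroDivisors_iff_right]
    intro x hx
    have h2 : n • x = 0 := by
      rw [zsmul_eq_mul, mul_comm]; simpa using hx
    exact (smul_eq_zero.mp h2).resolve_left hne
  have : FaithfulSMul ℤ (T ⧸ P) := (faithfulSMul_iff_algebraMap_injective _ _).mpr hinj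
  have : Algebra.IsIntegral ℤ T := inferInstance
  have : Algebra.IsIntegral ℤ (T ⧸ P) := inferInstance
  let g : (T ⧸ P) →ₐ[ℤ] AlgebraicClosure ℚ := IsAlgClosed.lift
  have hg : Function.Injective g := by
    rw [injective_iff_map_eq_zero]
    intro x hx
    by_contra hne
    have hc : Algebra.IsAlgebraic ℤ (T ⧸ P) := inferInstance
    obtain ⟨y, hy, hxy⟩ := (hc.isAlgebraic x).exists_nonzero_dvd (mem_nonZeroDivisors_of_ne_zero hne)
    obtain ⟨c, hc⟩ := hxy
    have := congrArg g hc
    rw [map_mul, hx, zero_mul] at this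
    simp at this
    exact hy this
  let f₀ : T →ₐ[ℤ] AlgebraicClosure ℚ := g.comp (Ideal.Quotient.mkₐ ℤ P)
  let f : T →ₐ[ℤ] Z := f₀.codRestrict Z
    (fun x => (Algebra.IsIntegral.isIntegral (R := ℤ) x).map f₀)
  have hf : ∀ x, f x = 0 → x ∈ Q := by
    intro x hx
    have h1 : g (Ideal.Quotient.mk P x) = 0 := congrArg Subtype.val hx
    exact hPQ (Ideal.Quotient.eq_zero_iff_mem.mp ((injective_iff_map_eq_zero g).mp hg _ h1))
  let _ : Algebra T Z := f.toRingHom.toAlgebra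
  have : IsScalarTower ℤ T Z := IsScalarTower.of_algebraMap_eq' (RingHom.ext_int _ _)
  have : Algebra.IsIntegral ℤ Z := inferInstance
  have : Algebra.IsIntegral T Z := Algebra.IsIntegral.tower_top (R := ℤ)
  obtain ⟨M, -, hM, hMQ⟩ := Ideal.exists_ideal_over_prime_of_isIntegral Q (⊥ : Ideal Z)
    (fun x hx => hf x hx)
  have : M.LiesOver Q := ⟨hMQ.symm⟩
  let _ : Algebra (T ⧸ Q) F := (RingHom.kerLift fbar).toAlgebra
  have : FaithfulSMul (T ⧸ Q) F :=
    (faithfulSMul_iff_algebraMap_injective _ _).mpr (RingHom.kerLift_injective fbar)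
  have : Algebra.IsIntegral (T ⧸ Q) (Z ⧸ M) := inferInstance
  have : FaithfulSMul (T ⧸ Q) (Z ⧸ M) := inferInstance
  have : (Q : Ideal T).IsPrime := hQ
  have : IsDomain (T ⧸ Q) := Ideal.Quotient.isDomain Q
  have : IsDomain (Z ⧸ M) := Ideal.Quotient.isDomain M
  have : Module.IsTorsionFree (T ⧸ Q) (Z ⧸ M) := FaithfulSMul.to_isTorsionFree _ _
  have : Module.IsTorsionFree (T ⧸ Q) F := FaithfulSMul.to_isTorsionFree _ _
  let l : (Z ⧸ M) →ₐ[T ⧸ Q] F := IsAlgClosed.lift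
  refine ⟨f.toRingHom, l.toRingHom.comp (Ideal.Quotient.mk M), ?_⟩
  ext x
  exact l.commutes (Ideal.Quotient.mk Q x)
end

section
/- Let R be a commutative ring, n ≥ 0 and N ≥ 1 integers such that n!·N (viewed in R) is a non-zero-divisor of R. Let f be a homogeneous polynomial of degree n in two variables X, Y over R. Then f is invariant under the R-algebra substitution (X, Y) ↦ (X, N·X + Y) if and only if f lies in the R-span of Xⁿ. (In other words, the invariants of V_n(R) = R[X,Y]_n under the matrix t = [[1,N],[0,1]] acting by (t.f)(X,Y) = f((X,Y)·t) are exactly R·Xⁿ.) -/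
open MvPolynomial

lemma aux_taylor {R : Type*} [CommRing R] (n N : ℕ)
    (hreg : ((n.factorial * N : ℕ) : R) ∈ nonZeroDivisors R)
    (g : Polynomial R) (hg : g.natDegree ≤ n) (ht : Polynomial.taylor (N : R) g = g) :
    g.natDegree = 0 := by
  by_contra hd
  obtain ⟨e, he⟩ := Nat.exists_eq_succ_of_ne_zero hd
  have h1 : (Polynomial.hasseDeriv e g).natDegree ≤ 1 := by
    have := Polynomial.natDegree_hasseDeriv_le g e
    omega
  have h2 := congrArg (fun p => Polynomial.coeff p e) ht
  simp only [Polynomial.taylor_coeff] at h2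
  rw [Polynomial.eq_X_add_C_of_natDegree_le_one h1] at h2
  simp only [Polynomial.hasseDeriv_coeff, Polynomial.eval_add, Polynomial.eval_mul,
    Polynomial.eval_C, Polynomial.eval_X, zero_add, Nat.choose_self, Nat.cast_one, one_mul,
    add_eq_right] at h2
  have h3 : (1 + e).choose e = e + 1 := by rw [add_comm, Nat.choose_succ_self_right]
  rw [h3, add_comm 1 e] at h2
  have h4 : (e + 1) ∣ n.factorial := Nat.dvd_factorial (by omega) (by omega)
  obtain ⟨c, hc⟩ := h4
  have h5 : g.coeff (e + 1) * ((n.factorial * N : ℕ) : R) = 0 := by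
    rw [hc]
    push_cast at h2 ⊢
    linear_combination (c : R) * h2
  have h6 := (mem_nonZeroDivisors_iff.1 hreg).2 _ h5
  have h7 : g.leadingCoeff = 0 := by
    rw [Polynomial.leadingCoeff, he]; exact h6
  rw [Polynomial.leadingCoeff_eq_zero] at h7
  simp [h7] at hd

lemma aux_coeff {R : Type*} [CommRing R] (n : ℕ)
    (f : MvPolynomial (Fin 2) R) (hf : f.IsHomogeneous n) (m : Fin 2 →₀ ℕ) (hm : m 0 + m 1 = n) :
    (aeval ![(1 : Polynomial R), Polynomial.X] f).coeff (m 1) = f.coeff m := by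
  rw [aeval_def, eval₂_eq', Polynomial.finset_sum_coeff]
  simp only [Fin.prod_univ_two, Matrix.cons_val_zero, Matrix.cons_val_one, one_pow, one_mul,
    Polynomial.algebraMap_eq, Polynomial.coeff_C_mul, Polynomial.coeff_X_pow]
  rw [Finset.sum_eq_single m]
  · simp
  · intro b hb hbm
    rw [if_neg, mul_zero]
    intro h
    apply hbm
    have := hf (mem_support_iff.1 hb)
    simp [Finsupp.weight_apply, Finsupp.sum_fintype, Fin.sum_univ_two] at this
    ext i
    fin_cases i
    · simp; omega
    · simp; omega
  · intro h
    simp [notMem_support_iff.1 h]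

lemma aux_deg {R : Type*} [CommRing R] (n : ℕ)
    (f : MvPolynomial (Fin 2) R) (hf : f.IsHomogeneous n) :
    (aeval ![(1 : Polynomial R), Polynomial.X] f).natDegree ≤ n := by
  rw [aeval_def, eval₂_eq']
  apply Polynomial.natDegree_sum_le_of_forall_le
  intro b hb
  have := hf (mem_support_iff.1 hb)
  simp [Finsupp.weight_apply, Finsupp.sum_fintype, Fin.sum_univ_two] at this
  simp only [Fin.prod_univ_two, Matrix.cons_val_zero, Matrix.cons_val_one, one_pow, one_mul,
    Polynomial.algebraMap_eq]
  exact (Polynomial.natDegree_C_mul_X_pow_le _ _).trans (by omega)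

/-- Let `R` be a commutative ring and `n, N` with `N ≥ 1` such that `n!·N` is a
non-zero-divisor in `R`. A homogeneous polynomial `f ∈ R[X,Y]` of degree `n` satisfies
`f(X, N·X + Y) = f(X, Y)` (i.e. is invariant under the matrix `[[1,N],[0,1]]`) if and only
if `f` lies in the `R`-span of `Xⁿ`. -/
theorem vn_invariants_eq_span_Xn
    (R : Type*) [CommRing R] (n N : ℕ) (hN : 1 ≤ N)
    (hreg : ((n.factorial * N : ℕ) : R) ∈ nonZeroDivisors R)
    (f : MvPolynomial (Fin 2) R) (hf : f.IsHomogeneous n) :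
    aeval ![(X 0 : MvPolynomial (Fin 2) R), (N : MvPolynomial (Fin 2) R) * X 0 + X 1] f = f ↔
      f ∈ Submodule.span R {(X 0 : MvPolynomial (Fin 2) R) ^ n} := by
  rw [Submodule.mem_span_singleton]
  constructor
  · intro h
    have key : (aeval ![(1 : Polynomial R), Polynomial.X]).comp
        (aeval ![(X 0 : MvPolynomial (Fin 2) R), (N : MvPolynomial (Fin 2) R) * X 0 + X 1]) =
        (Polynomial.taylorAlgHom (N : R)).comp (aeval ![(1 : Polynomial R), Polynomial.X]) := by
      apply MvPolynomial.algHom_ext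
      intro i
      fin_cases i
      · simp
      · simp [add_comm]
    have ht := DFunLike.congr_fun key f
    simp only [AlgHom.comp_apply, h] at ht
    have hd := aux_taylor n N hreg _ (aux_deg n f hf) ht.symm
    refine ⟨f.coeff (Finsupp.single 0 n), ?_⟩
    ext m
    rw [coeff_smul, coeff_X_pow]
    by_cases hm : m 0 + m 1 = n
    · by_cases h1 : m 1 = 0
      · have : Finsupp.single 0 n = m := by
          ext i
          fin_cases i
          · simp; omega
          · simp [h1]
        simp [this]
      · rw [← aux_coeff n f hf m hm, Polynomial.coeff_eq_zero_of_natDegree_lt (by omega), if_neg]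
        · simp
        · rintro rfl
          simp at h1
    · rw [if_neg, smul_zero]
      · by_contra hb
        have := hf (Ne.symm hb)
        simp [Finsupp.weight_apply, Finsupp.sum_fintype, Fin.sum_univ_two] at this
        exact hm this
      · rintro rfl
        simp at hm
  · rintro ⟨a, rfl⟩
    simp
end

section
/- Let 𝓕 := {z ∈ ℂ : Im z > 0, |z| > 1, |Re z| < 1/2} be the standard fundamental domain for the action of SL₂(ℤ) on the upper half-plane. Then the hyperbolic area of 𝓕 equals π/3, i.e. ∫_𝓕 (Im z)^{-2} dμ(z) = π/3, where μ is Lebesgue measure on ℂ ≅ ℝ² (so the integral is ∫∫_𝓕 dx dy / y² with z = x + iy). -/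
open MeasureTheory

lemma inner_aux (c : ℝ) (hc : 0 < c) :
    ∫⁻ y in Set.Ioi c, ENNReal.ofReal (1 / y ^ 2) = ENNReal.ofReal (1 / c) := by
  have e : ∀ y ∈ Set.Ioi c, y ^ (-2 : ℝ) = 1 / y ^ 2 := by
    intro y hy
    have hy0 : 0 < y := hc.trans hy
    rw [Real.rpow_neg hy0.le, one_div]
    norm_num
  have hi : IntegrableOn (fun y : ℝ => 1 / y ^ 2) (Set.Ioi c) :=
    (integrableOn_Ioi_rpow_of_lt (by norm_num : (-2 : ℝ) < -1) hc).congr_fun e measurableSet_Ioi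
  rw [← ofReal_integral_eq_lintegral_ofReal hi (Filter.Eventually.of_forall fun y => by positivity),
    ← setIntegral_congr_fun measurableSet_Ioi e,
    integral_Ioi_rpow_of_lt (by norm_num : (-2 : ℝ) < -1) hc]
  congr 1
  have : (-2 : ℝ) + 1 = -1 := by norm_num
  rw [this, Real.rpow_neg_one]
  simp

lemma outer_aux :
    ∫⁻ x in Set.Ioo (-(1 / 2) : ℝ) (1 / 2), ENNReal.ofReal (1 / √(1 - x ^ 2)) =
      ENNReal.ofReal (Real.pi / 3) := by
  have hcont : ContinuousOn (fun x : ℝ => 1 / √(1 - x ^ 2)) (Set.Icc (-(1 / 2) : ℝ) (1 / 2)) := by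
    apply ContinuousOn.div (by fun_prop) (by fun_prop)
    intro x hx
    have : 0 < 1 - x ^ 2 := by nlinarith [hx.1, hx.2]
    positivity
  have hi := (hcont.integrableOn_Icc (μ := volume)).mono_set Set.Ioo_subset_Icc_self
  rw [← ofReal_integral_eq_lintegral_ofReal hi (Filter.Eventually.of_forall fun y => by positivity)]
  congr 1
  rw [← integral_Ioc_eq_integral_Ioo, ← intervalIntegral.integral_of_le (by norm_num),
    intervalIntegral.integral_eq_sub_of_hasDerivAt (f := Real.arcsin)]
  · have h : Real.arcsin (1 / 2) = Real.pi / 6 := by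
      rw [← Real.sin_pi_div_six, Real.arcsin_sin] <;> linarith [Real.pi_pos]
    rw [Real.arcsin_neg, h]
    ring
  · intro x hx
    rw [Set.uIcc_of_le (by norm_num)] at hx
    exact Real.hasDerivAt_arcsin (by linarith [hx.1]) (by linarith [hx.2])
  · apply ContinuousOn.intervalIntegrable
    rwa [Set.uIcc_of_le (by norm_num)]

/-- The hyperbolic area of the standard fundamental domain
`𝓕 = {z ∈ ℍ : |z| > 1, |Re z| < 1/2}` for the action of `SL₂(ℤ)` on the upper half-plane
equals `π/3`:  `∫∫_𝓕 dx dy / y² = π/3`. -/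
theorem standard_fundamental_domain_area :
    ∫ z in {z : ℂ | 0 < z.im ∧ 1 < ‖z‖ ∧ |z.re| < 1 / 2}, 1 / z.im ^ 2 =
      Real.pi / 3 := by
  have hS : MeasurableSet {z : ℂ | 0 < z.im ∧ 1 < ‖z‖ ∧ |z.re| < 1 / 2} := by
    apply IsOpen.measurableSet
    exact (isOpen_lt continuous_const Complex.continuous_im).inter
      ((isOpen_lt continuous_const continuous_norm).inter
        (isOpen_lt Complex.continuous_re.abs continuous_const))
  have hm : Measurable fun z : ℂ => 1 / z.im ^ 2 := by fun_prop
  rw [integral_eq_lintegral_of_nonneg_ae (Filter.Eventually.of_forall fun y => by positivity)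
    hm.aestronglyMeasurable]
  rw [← lintegral_indicator hS,
    ← (Complex.volume_preserving_equiv_real_prod.symm).lintegral_comp
      ((hm.ennreal_ofReal).indicator hS), Measure.volume_eq_prod, lintegral_prod]
  swap
  · exact (((hm.ennreal_ofReal).indicator hS).comp
      Complex.measurableEquivRealProd.symm.measurable).aemeasurable
  have key : ∀ x : ℝ, (∫⁻ y : ℝ, Set.indicator {z : ℂ | 0 < z.im ∧ 1 < ‖z‖ ∧ |z.re| < 1 / 2}
      (fun z => ENNReal.ofReal (1 / z.im ^ 2)) (Complex.measurableEquivRealProd.symm (x, y))) =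
      Set.indicator (Set.Ioo (-(1 / 2) : ℝ) (1 / 2))
        (fun x => ENNReal.ofReal (1 / √(1 - x ^ 2))) x := by
    intro x
    by_cases hx : x ∈ Set.Ioo (-(1 / 2) : ℝ) (1 / 2)
    · have hp : 0 < 1 - x ^ 2 := by nlinarith [hx.1, hx.2]
      rw [Set.indicator_of_mem hx, ← inner_aux _ (Real.sqrt_pos.2 hp),
        ← lintegral_indicator measurableSet_Ioi]
      congr 1
      ext1 y
      have hiff : (Complex.measurableEquivRealProd.symm (x, y)) ∈
          {z : ℂ | 0 < z.im ∧ 1 < ‖z‖ ∧ |z.re| < 1 / 2} ↔ y ∈ Set.Ioi (√(1 - x ^ 2)) := by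
        simp only [Complex.measurableEquivRealProd_symm_apply, Set.mem_ofPred_eq, Set.mem_Ioi,
          Complex.norm_def, Complex.normSq_mk, abs_lt]
        rw [Real.lt_sqrt (by norm_num)]
        constructor
        · rintro ⟨h1, h2, -⟩
          rw [Real.sqrt_lt' h1]
          nlinarith
        · intro h
          have h1 : 0 < y := (Real.sqrt_nonneg _).trans_lt h
          rw [Real.sqrt_lt' h1] at h
          exact ⟨h1, by nlinarith, hx.1, hx.2⟩
      by_cases hy : y ∈ Set.Ioi (√(1 - x ^ 2))
      · rw [Set.indicator_of_mem hy, Set.indicator_of_mem (hiff.2 hy)]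
        rfl
      · rw [Set.indicator_of_notMem hy, Set.indicator_of_notMem (fun h => hy (hiff.1 h))]
    · rw [Set.indicator_of_notMem hx]
      convert lintegral_zero with y
      apply Set.indicator_of_notMem
      intro h
      exact hx (abs_lt.1 h.2.2)
  simp_rw [key]
  rw [lintegral_indicator measurableSet_Ioo, outer_aux, ENNReal.toReal_ofReal (by positivity)]
end

section
/- Let N and n be positive integers, and let A = (a b; c d) be a 2×2 integer matrix with det A = n, N ∣ c, and gcd(a, N) = 1 (i.e. A ∈ Δ₀ⁿ(N)). Then there exist unique integers a', b' and a unique γ ∈ Γ₀(N) such that a' > 0, a' divides n, gcd(a', N) = 1, 0 ≤ b' < n/a', and A = γ · (a' b'; 0 n/a'). In other words, Δ₀ⁿ(N) is the disjoint union of the right cosets Γ₀(N)·(a b; 0 d) over all positive divisors a of n coprime to N, with d = n/a and 0 ≤ b < d. -/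
open scoped MatrixGroups

lemma delta0_aux_unique {n a b c d g1 t1 p1 s1 r1 w1 g2 t2 p2 s2 r2 w2 : ℤ} (hn : 0 < n)
    (hg1 : 0 < g1) (hd1 : g1 ∣ n) (ht1 : 0 ≤ t1) (ht1' : t1 < n / g1)
    (hg2 : 0 < g2) (hd2 : g2 ∣ n) (ht2 : 0 ≤ t2) (ht2' : t2 < n / g2)
    (D1 : p1 * w1 - s1 * r1 = 1) (D2 : p2 * w2 - s2 * r2 = 1)
    (a1 : a = p1 * g1) (b1 : b = p1 * t1 + s1 * (n / g1))
    (c1 : c = r1 * g1) (d1 : d = r1 * t1 + w1 * (n / g1))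
    (a2 : a = p2 * g2) (b2 : b = p2 * t2 + s2 * (n / g2))
    (c2 : c = r2 * g2) (d2 : d = r2 * t2 + w2 * (n / g2)) :
    g1 = g2 ∧ t1 = t2 ∧ p1 = p2 ∧ s1 = s2 ∧ r1 = r2 ∧ w1 = w2 := by
  have e1 : g1 ∣ g2 := ⟨w2 * p1 - s2 * r1, by
    linear_combination (-g2) * D2 - w2 * a2 + w2 * a1 + s2 * c2 - s2 * c1⟩
  have e2 : g2 ∣ g1 := ⟨w1 * p2 - s1 * r2, by
    linear_combination (-g1) * D1 - w1 * a1 + w1 * a2 + s1 * c1 - s1 * c2⟩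
  obtain rfl : g1 = g2 := Int.dvd_antisymm hg1.le hg2.le e1 e2
  obtain rfl : p1 = p2 := mul_right_cancel₀ hg1.ne' (a1.symm.trans a2)
  obtain rfl : r1 = r2 := mul_right_cancel₀ hg1.ne' (c1.symm.trans c2)
  generalize n / g1 = m at *
  have hm : m ≠ 0 := by omega
  have e3 : m ∣ t1 - t2 := ⟨w1 * (s2 - s1) - s1 * (w2 - w1), by
    linear_combination (-(t1 - t2)) * D1 + w1 * b2 - w1 * b1 - s1 * d2 + s1 * d1⟩
  have e4 : t1 - t2 = 0 := Int.eq_zero_of_abs_lt_dvd e3 (by rw [abs_lt]; constructor <;> omega)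
  obtain rfl : t1 = t2 := by omega
  refine ⟨rfl, rfl, rfl, mul_right_cancel₀ hm ?_, rfl, mul_right_cancel₀ hm ?_⟩
  · linear_combination b2 - b1
  · linear_combination d2 - d1

lemma delta0_aux_eq (γ : SL(2, ℤ)) (A : Matrix (Fin 2) (Fin 2) ℤ) (g t m : ℤ)
    (h : A = (γ : Matrix (Fin 2) (Fin 2) ℤ) * !![g, t; 0, m]) :
    A 0 0 = γ 0 0 * g ∧ A 0 1 = γ 0 0 * t + γ 0 1 * m ∧
    A 1 0 = γ 1 0 * g ∧ A 1 1 = γ 1 0 * t + γ 1 1 * m := by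
  subst h
  simp [Matrix.mul_apply, Fin.sum_univ_two]

/-- Coset decomposition of `Δ₀ⁿ(N)`: every integer matrix `A` of determinant `n ≥ 1` whose
lower-left entry is divisible by `N` and whose upper-left entry is coprime to `N` can be
written uniquely as `A = γ · [[a, b], [0, n/a]]` with `γ ∈ Γ₀(N)`, `a > 0`, `a ∣ n`,
`gcd(a, N) = 1` and `0 ≤ b < n/a`. -/
theorem delta0_coset_decomposition
    (N n : ℕ) (hN : 0 < N) (hn : 0 < n)
    (A : Matrix (Fin 2) (Fin 2) ℤ) (hdet : A.det = (n : ℤ))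
    (hc : (N : ℤ) ∣ A 1 0) (ha : IsCoprime (A 0 0) (N : ℤ)) :
    ∃! x : ℤ × ℤ × CongruenceSubgroup.Gamma0 N,
      0 < x.1 ∧ x.1 ∣ (n : ℤ) ∧ IsCoprime x.1 (N : ℤ) ∧
      0 ≤ x.2.1 ∧ x.2.1 < (n : ℤ) / x.1 ∧
      A = ((x.2.2 : SL(2, ℤ)) : Matrix (Fin 2) (Fin 2) ℤ) *
        !![x.1, x.2.1; 0, (n : ℤ) / x.1] := by
  have hdet' := hdet
  rw [Matrix.det_fin_two] at hdet'
  have hn' : (0 : ℤ) < n := by exact_mod_cast hn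
  apply existsUnique_of_exists_of_unique
  · obtain ⟨a, hA0⟩ : ∃ a, A 0 0 = a := ⟨_, rfl⟩
    obtain ⟨b, hA1⟩ : ∃ a, A 0 1 = a := ⟨_, rfl⟩
    obtain ⟨c, hA2⟩ : ∃ a, A 1 0 = a := ⟨_, rfl⟩
    obtain ⟨d, hA3⟩ : ∃ a, A 1 1 = a := ⟨_, rfl⟩
    rw [hA0, hA1, hA2, hA3] at hdet'
    rw [hA2] at hc
    rw [hA0] at ha
    obtain ⟨g, hg⟩ : ∃ g : ℤ, g = (Int.gcd a c : ℤ) := ⟨_, rfl⟩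
    obtain ⟨p, hp⟩ : g ∣ a := hg ▸ Int.gcd_dvd_left a c
    obtain ⟨r, hr⟩ : g ∣ c := hg ▸ Int.gcd_dvd_right a c
    have hb := Int.gcd_eq_gcd_ab a c
    rw [← hg] at hb
    generalize Int.gcdA a c = u at hb
    generalize Int.gcdB a c = v at hb
    have hg0 : g ≠ 0 := by
      rintro rfl
      simp only [zero_mul] at hp hr
      subst hp hr
      simp at hdet'
      omega
    have hgp : 0 < g := by
      have : 0 ≤ g := by rw [hg]; positivity
      omega
    have huv : p * u + r * v = 1 := by
      apply mul_left_cancel₀ hg0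
      linear_combination (-1) * hb - u * hp - v * hr
    have hnm : (n : ℤ) = g * (p * d - r * b) := by
      linear_combination (-1) * hdet' + d * hp - b * hr
    have hm : (n : ℤ) / g = p * d - r * b := by
      rw [hnm, Int.mul_ediv_cancel_left _ hg0]
    have hmp : 0 < p * d - r * b := by
      rw [hnm] at hn'
      exact pos_of_mul_pos_right hn' hgp.le
    have hgN : IsCoprime g (N : ℤ) := ha.of_isCoprime_of_dvd_left ⟨p, hp⟩
    have hNr : (N : ℤ) ∣ r := by
      rw [hr] at hc
      exact hgN.symm.dvd_of_dvd_mul_left hc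
    obtain ⟨q, hq⟩ : ∃ q, q = (u * b + v * d) / (p * d - r * b) := ⟨_, rfl⟩
    obtain ⟨t, ht⟩ : ∃ t, t = (u * b + v * d) % (p * d - r * b) := ⟨_, rfl⟩
    have hqt : t + (p * d - r * b) * q = u * b + v * d := by
      rw [hq, ht]; exact Int.emod_add_mul_ediv _ _
    let γ : SL(2, ℤ) := ⟨!![p, p * q - v; r, r * q + u], by
      rw [Matrix.det_fin_two_of]; linear_combination huv⟩
    have hγ : γ ∈ CongruenceSubgroup.Gamma0 N := by
      rw [CongruenceSubgroup.Gamma0_mem]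
      exact (ZMod.intCast_zmod_eq_zero_iff_dvd _ _).2 hNr
    refine ⟨⟨g, t, ⟨γ, hγ⟩⟩, hgp, ⟨_, hnm⟩, hgN, ?_, ?_, ?_⟩
    · exact ht ▸ Int.emod_nonneg _ hmp.ne'
    · show t < (n : ℤ) / g
      rw [hm]; exact ht ▸ Int.emod_lt_of_pos _ hmp
    · show A = !![p, p * q - v; r, r * q + u] * !![g, t; 0, (n : ℤ) / g]
      rw [hm, Matrix.eta_fin_two A, hA0, hA1, hA2, hA3, Matrix.mul_fin_two]
      have h1 : a = p * g + (p * q - v) * 0 := by linear_combination hp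
      have h2 : b = p * t + (p * q - v) * (p * d - r * b) := by
        linear_combination (-p) * hqt - b * huv
      have h3 : c = r * g + (r * q + u) * 0 := by linear_combination hr
      have h4 : d = r * t + (r * q + u) * (p * d - r * b) := by
        linear_combination (-r) * hqt - d * huv
      rw [← h1, ← h2, ← h3, ← h4]
  · rintro ⟨g1, t1, γ1, h1⟩ ⟨g2, t2, γ2, h2⟩ ⟨p1, q1, -, r1, s1, e1⟩ ⟨p2, q2, -, r2, s2, e2⟩
    obtain ⟨a1, b1, c1, d1⟩ := delta0_aux_eq _ _ _ _ _ e1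
    obtain ⟨a2, b2, c2, d2⟩ := delta0_aux_eq _ _ _ _ _ e2
    have D1 := γ1.det_coe
    have D2 := γ2.det_coe
    rw [Matrix.det_fin_two] at D1 D2
    obtain ⟨k1, k2, k3, k4, k5, k6⟩ := delta0_aux_unique hn' p1 q1 r1 s1 p2 q2 r2 s2 D1 D2
      a1 b1 c1 d1 a2 b2 c2 d2
    dsimp only at k1 k2
    subst k1 k2
    obtain rfl : γ1 = γ2 := by
      ext i j
      fin_cases i <;> fin_cases j
      exacts [k3, k4, k5, k6]
    rfl
end

section
/- Let G be a group, Γ ≤ G a subgroup, and α, β ∈ G. Suppose Γ·α·Γ = ⨆_{i∈I} Γ·α_i and Γ·β·Γ = ⨆_{j∈J} Γ·β_j are decompositions of the double cosets into pairwise disjoint right cosets, with I and J finite. For γ ∈ G put m(γ) := #{(i, j) ∈ I × J : Γ·(α_i·β_j) = Γ·γ}. Then m(γ) depends only on the double coset of γ: if γ, γ' ∈ G satisfy Γ·γ·Γ = Γ·γ'·Γ, then m(γ) = m(γ'). (This is the well-definedness of the multiplicities in the multiplication of the Hecke ring R(Δ, Γ).) -/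
theorem aux_coset {G : Type*} [Group G] (Γ : Subgroup G) (x y : G) :
    (fun g => g * x) '' (Γ : Set G) = (fun g => g * y) '' (Γ : Set G) ↔ x * y⁻¹ ∈ Γ := by
  constructor
  · intro h
    have hx : x ∈ (fun g => g * x) '' (Γ : Set G) := ⟨1, Γ.one_mem, one_mul x⟩
    rw [h] at hx
    obtain ⟨g, hg, hgx⟩ := hx
    simp only at hgx
    rw [← hgx]
    simpa using hg
  · intro h
    ext z
    constructor
    · rintro ⟨g, hg, rfl⟩
      exact ⟨g * (x * y⁻¹), Γ.mul_mem hg h, by simp [mul_assoc]⟩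
    · rintro ⟨g, hg, rfl⟩
      exact ⟨g * (x * y⁻¹)⁻¹, Γ.mul_mem hg (Γ.inv_mem h), by simp [mul_assoc]⟩

theorem aux_act {G : Type*} [Group G] (Γ : Subgroup G) (α : G) {I : Type*} (a : I → G)
    (hc : (⋃ i, (fun g => g * a i) '' (Γ : Set G)) =
      {x : G | ∃ g ∈ Γ, ∃ h ∈ Γ, x = g * α * h}) (i : I) (h : G) (hh : h ∈ Γ) :
    ∃ i', a i * h * (a i')⁻¹ ∈ Γ := by
  have h1 : a i ∈ (⋃ i, (fun g => g * a i) '' (Γ : Set G)) :=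
    Set.mem_iUnion.2 ⟨i, 1, Γ.one_mem, one_mul _⟩
  rw [hc] at h1
  obtain ⟨g, hg, k, hk, e⟩ := h1
  have h2 : a i * h ∈ (⋃ i, (fun g => g * a i) '' (Γ : Set G)) := by
    rw [hc]
    exact ⟨g, hg, k * h, Γ.mul_mem hk hh, by rw [e]; group⟩
  obtain ⟨i', c, hc', e'⟩ := Set.mem_iUnion.1 h2
  refine ⟨i', ?_⟩
  simp only at e'
  rw [← e']
  simpa using hc'

theorem aux_inj {G : Type*} [Group G] (Γ : Subgroup G) {I : Type*} (a : I → G)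
    (hd : Pairwise fun i i' =>
      Disjoint ((fun g => g * a i) '' (Γ : Set G)) ((fun g => g * a i') '' (Γ : Set G)))
    (i i' : I) (h : a i * (a i')⁻¹ ∈ Γ) : i = i' := by
  by_contra hne
  exact Set.disjoint_left.1 (hd hne) ⟨1, Γ.one_mem, one_mul _⟩
    ⟨a i * (a i')⁻¹, h, by simp⟩

theorem aux_le {G : Type*} [Group G] (Γ : Subgroup G) {I J : Type*} [Finite I] [Finite J]
    (a : I → G) (b : J → G)
    (ha : ∀ i, ∀ h ∈ Γ, ∃ i', a i * h * (a i')⁻¹ ∈ Γ)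
    (hai : ∀ i i', a i * (a i')⁻¹ ∈ Γ → i = i')
    (hb : ∀ i, ∀ h ∈ Γ, ∃ i', b i * h * (b i')⁻¹ ∈ Γ)
    (hbi : ∀ i i', b i * (b i')⁻¹ ∈ Γ → i = i')
    (γ γ' g h : G) (hg : g ∈ Γ) (hh : h ∈ Γ) (e : γ' = g * γ * h) :
    Nat.card {p : I × J // a p.1 * b p.2 * γ⁻¹ ∈ Γ} ≤
      Nat.card {p : I × J // a p.1 * b p.2 * γ'⁻¹ ∈ Γ} := by
  choose f hf using fun j => hb j h hh
  choose k hk using fun i j => ha i _ (hf j)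
  refine Nat.card_le_card_of_injective
    (fun p => ⟨(k p.1.1 p.1.2, f p.1.2), ?_⟩) ?_
  · have := Γ.mul_mem (Γ.mul_mem (Γ.inv_mem (hk p.1.1 p.1.2)) p.2) (Γ.inv_mem hg)
    convert this using 1
    rw [e]
    group
  · rintro ⟨⟨i, j⟩, h1⟩ ⟨⟨i', j'⟩, h2⟩ hE
    simp only [Subtype.mk.injEq, Prod.mk.injEq] at hE
    obtain ⟨e1, e2⟩ := hE
    have hj : j = j' := by
      apply hbi
      have := Γ.mul_mem (hf j) (Γ.inv_mem (hf j'))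
      rw [e2] at this
      convert this using 1
      group
    subst hj
    have hi : i = i' := by
      apply hai
      have := Γ.mul_mem (hk i j) (Γ.inv_mem (hk i' j))
      rw [e1] at this
      convert this using 1
      group
    subst hi
    rfl

/-- Well-definedness of the multiplicities in the Hecke ring: given disjoint right coset
decompositions `Γ·α·Γ = ⨆ᵢ Γ·αᵢ` and `Γ·β·Γ = ⨆ⱼ Γ·βⱼ` (with finite index sets), the number
`m(γ) = #{(i,j) : Γ·(αᵢβⱼ) = Γ·γ}` only depends on the double coset `Γ·γ·Γ` of `γ`. -/
theorem heckeRing_multiplicity_well_defined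
    (G : Type*) [Group G] (Γ : Subgroup G) (α β : G)
    {I J : Type*} [Finite I] [Finite J] (a : I → G) (b : J → G)
    (hacover : (⋃ i, (fun g => g * a i) '' (Γ : Set G)) =
      {x : G | ∃ g ∈ Γ, ∃ h ∈ Γ, x = g * α * h})
    (hadisj : Pairwise fun i i' =>
      Disjoint ((fun g => g * a i) '' (Γ : Set G)) ((fun g => g * a i') '' (Γ : Set G)))
    (hbcover : (⋃ j, (fun g => g * b j) '' (Γ : Set G)) =
      {x : G | ∃ g ∈ Γ, ∃ h ∈ Γ, x = g * β * h})
    (hbdisj : Pairwise fun j j' =>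
      Disjoint ((fun g => g * b j) '' (Γ : Set G)) ((fun g => g * b j') '' (Γ : Set G)))
    (γ γ' : G)
    (h : {x : G | ∃ g ∈ Γ, ∃ h ∈ Γ, x = g * γ * h} =
      {x : G | ∃ g ∈ Γ, ∃ h ∈ Γ, x = g * γ' * h}) :
    Nat.card {p : I × J //
        (fun g => g * (a p.1 * b p.2)) '' (Γ : Set G) = (fun g => g * γ) '' (Γ : Set G)} =
      Nat.card {p : I × J //
        (fun g => g * (a p.1 * b p.2)) '' (Γ : Set G) = (fun g => g * γ') '' (Γ : Set G)} := by
  simp only [aux_coset]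
  have hγ : γ' ∈ {x : G | ∃ g ∈ Γ, ∃ h ∈ Γ, x = g * γ * h} := by
    rw [h]
    exact ⟨1, Γ.one_mem, 1, Γ.one_mem, by simp⟩
  obtain ⟨g, hg, k, hk, e⟩ := hγ
  have A := aux_act Γ α a hacover
  have B := aux_act Γ β b hbcover
  have A' := aux_inj Γ a hadisj
  have B' := aux_inj Γ b hbdisj
  exact le_antisymm (aux_le Γ a b A A' B B' γ γ' g k hg hk e)
    (aux_le Γ a b A A' B B' γ' γ g⁻¹ k⁻¹ (Γ.inv_mem hg) (Γ.inv_mem hk) (by rw [e]; group))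
end

section
/- Let R be a Noetherian commutative ring, S a commutative R-algebra that is flat as an R-module, M a finitely generated R-module, and (T_i)_{i∈ι} a family of R-linear endomorphisms of M. Let 𝕋_R ⊆ End_R(M) be the R-subalgebra generated by the T_i, and let 𝕋_S ⊆ End_S(S ⊗_R M) be the S-subalgebra generated by the base-changed endomorphisms id_S ⊗ T_i. Then the canonical S-algebra homomorphism 𝕋_R ⊗_R S → End_S(S ⊗_R M), induced by base change of endomorphisms T ↦ id_S ⊗ T, is injective and its image equals 𝕋_S; in particular 𝕋_R ⊗_R S ≅ 𝕋_S as S-algebras. -/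
open scoped TensorProduct

theorem hecke_aux (R S M N : Type*) [CommRing R] [IsNoetherianRing R] [CommRing S] [Algebra R S]
    [Module.Flat R S] [AddCommGroup M] [Module R M] [Module.Finite R M]
    [AddCommGroup N] [Module R N] (i : N →ₗ[R] Module.End R M) (hi : Function.Injective i) :
    ∃ F : S ⊗[R] N →+ Module.End S (S ⊗[R] M), Function.Injective F ∧
      ∀ s n, F (s ⊗ₜ[R] n) = s • LinearMap.baseChange S (i n) := by
  have : Module.FinitePresentation R M := Module.finitePresentation_of_finite R M
  have hB : IsBaseChange S (LinearMap.baseChangeHom R S M M) :=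
    Module.FinitePresentation.isBaseChange_map R M M S
  have h1 : Function.Injective (LinearMap.lTensor S i) :=
    Module.Flat.lTensor_preserves_injective_linearMap _ hi
  refine ⟨hB.equiv.toLinearMap.toAddMonoidHom.comp (LinearMap.lTensor S i).toAddMonoidHom,
    hB.equiv.injective.comp h1, fun s n => ?_⟩
  exact hB.equiv_tmul s (i n)

set_option synthInstance.maxHeartbeats 1000000 in
/-- Base change of Hecke algebras. Let `R` be a Noetherian commutative ring, `S` a flat
commutative `R`-algebra, `M` a finitely generated `R`-module, and `(Tᵢ)` a family of
`R`-linear endomorphisms of `M`. Let `𝕋_R ⊆ End_R(M)` be the `R`-subalgebra generated by the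
`Tᵢ`, and `𝕋_S ⊆ End_S(S ⊗_R M)` the `S`-subalgebra generated by the base changes of the
`Tᵢ`. Then the canonical `S`-algebra homomorphism `𝕋_R ⊗_R S → End_S(S ⊗_R M)` (determined
by `T ⊗ 1 ↦ id_S ⊗ T`) is injective with image `𝕋_S`; in particular
`𝕋_R ⊗_R S ≅ 𝕋_S` as `S`-algebras. -/
theorem heckeAlgebra_baseChange
    (R S M : Type*) [CommRing R] [IsNoetherianRing R] [CommRing S] [Algebra R S]
    [Module.Flat R S] [AddCommGroup M] [Module R M] [Module.Finite R M]
    {ι : Type*} (T : ι → Module.End R M)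
    (Φ : (S ⊗[R] (Algebra.adjoin R (Set.range T) : Subalgebra R (Module.End R M))) →ₐ[S]
      Module.End S (S ⊗[R] M))
    (hΦ : ∀ t : (Algebra.adjoin R (Set.range T) : Subalgebra R (Module.End R M)),
      Φ ((1 : S) ⊗ₜ[R] t) = LinearMap.baseChange S (t : Module.End R M)) :
    Function.Injective Φ ∧
      Φ.range = Algebra.adjoin S (Set.range fun i =>
        (LinearMap.baseChange S (T i) : Module.End S (S ⊗[R] M))) := by
  have hb : ∀ (s : S) (t : (Algebra.adjoin R (Set.range T) : Subalgebra R (Module.End R M))),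
      Φ (s ⊗ₜ[R] t) = s • LinearMap.baseChange S (t : Module.End R M) := by
    intro s t
    rw [← hΦ t, ← map_smul, TensorProduct.smul_tmul', smul_eq_mul, mul_one]
  constructor
  · obtain ⟨F, hF, hF'⟩ := hecke_aux R S M _
      (Algebra.adjoin R (Set.range T)).val.toLinearMap Subtype.val_injective
    have h3 : ∀ x, Φ x = F x := by
      intro x
      induction x using TensorProduct.induction_on with
      | zero => rw [map_zero, map_zero]
      | tmul s t => rw [hb, hF']; rfl
      | add x y hx hy => rw [map_add, map_add, hx, hy]
    intro x y hxy
    rw [h3, h3] at hxy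
    exact hF hxy
  · apply le_antisymm
    · rintro _ ⟨x, rfl⟩
      change Φ x ∈ _
      induction x using TensorProduct.induction_on with
      | zero => rw [map_zero]; exact zero_mem _
      | tmul s t =>
        rw [hb]
        apply Subalgebra.smul_mem
        obtain ⟨t, ht⟩ := t
        change LinearMap.baseChange S t ∈ _
        induction ht using Algebra.adjoin_induction with
        | mem x hx =>
          obtain ⟨i, rfl⟩ := hx
          exact Algebra.subset_adjoin ⟨i, rfl⟩
        | algebraMap r =>
          have : LinearMap.baseChange S (algebraMap R (Module.End R M) r) =
              algebraMap S (Module.End S (S ⊗[R] M)) (algebraMap R S r) := by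
            ext m
            simp [TensorProduct.smul_tmul', Algebra.algebraMap_eq_smul_one]
          rw [this]
          exact Subalgebra.algebraMap_mem _ _
        | add x y _ _ hx hy => rw [LinearMap.baseChange_add]; exact add_mem hx hy
        | mul x y _ _ hx hy => rw [LinearMap.baseChange_mul]; exact mul_mem hx hy
      | add x y hx hy => rw [map_add]; exact add_mem hx hy
    · apply Algebra.adjoin_le
      rintro _ ⟨i, rfl⟩
      exact ⟨(1 : S) ⊗ₜ[R] ⟨T i, Algebra.subset_adjoin ⟨i, rfl⟩⟩, hΦ _⟩
end
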